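/- arXiv:1010.1086 — 2 statements merged into one kernel-verified Lean document; each statement's English description precedes it below -/
import Mathlib

section
/- Let α ∈ (0,1), n ≥ 2, and let w ∈ W_{2n} be a configuration with E(w) > 0. Let A(w) be the set of positions i (1 ≤ i < 2n) such that w_i ≠ w_{i+1} and E(w^{(i)}) ≤ E(w), where w^{(i)} is the word obtained from w by exchanging w_i and w_{i+1}. Then A(w) is nonempty and the average variation of the variant over the allowed flips satisfies (1/|A(w)|)·Σ_{i ∈ A(w)} (φ_α(w^{(i)}) − φ_α(w)) ≤ −(α(1−α)/2)·n^{α−2}. -/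
open scoped BigOperators ENNReal

attribute [local instance] Classical.propDecidable

namespace Cooling

/-- Words over the alphabet `{1,2}`, modeled as lists of booleans:
`true` encodes the letter `1`, `false` encodes the letter `2`. -/
abbrev Word := List Bool

/-- `w` is a configuration of length `2*n`: a word of length `2*n` with as many
occurrences of the letter `1` (`true`) as of the letter `2` (`false`). -/
def IsConfig (n : ℕ) (w : Word) : Prop :=
  w.length = 2 * n ∧ w.count true = n

/-- The (finite) set `W_{2n}` of all configurations of length `2*n`. -/
def configSet (n : ℕ) : Finset Word :=
  ((Finset.univ : Finset (Fin (2 * n) → Bool)).image List.ofFn).filter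
    (fun w => w.count true = n)

/-- The number `E(w)` of mismatches of `w`: positions `i` with `w_i = w_{i+1}`. -/
def mismatches (w : Word) : ℕ :=
  (w.zip w.tail).countP (fun p => p.1 == p.2)

/-- The number `F(w)` of flips performable on `w`: positions `i` with `w_i ≠ w_{i+1}`. -/
def flipCount (w : Word) : ℕ :=
  (w.zip w.tail).countP (fun p => p.1 != p.2)

/-- The word `w^{(i)}` obtained from `w` by exchanging the letters at positions
`i` and `i+1` (0-indexed). -/
def flip (w : Word) (i : ℕ) : Word :=
  (w.set i (w.getD (i + 1) true)).set (i + 1) (w.getD i true)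

/-- A flip is permitted at position `i` if both positions `i` and `i+1` exist and the
corresponding letters are different. -/
def CanFlip (w : Word) (i : ℕ) : Prop :=
  i + 1 < w.length ∧ w.getD i true ≠ w.getD (i + 1) true

/-- The set of positions at which a flip is allowed in the cooling process:
positions of permitted flips which do not increase the number of mismatches. -/
noncomputable def allowedFlips (w : Word) : Finset ℕ :=
  (Finset.range w.length).filter
    (fun i => CanFlip w i ∧ mismatches (flip w i) ≤ mismatches w)

/-- One step of the cooling process: if `E(w) = 0`, stay at `w`; otherwise, perform
a flip chosen uniformly at random among the flips which do not increase the number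
of mismatches. -/
noncomputable def coolStep (w : Word) : PMF Word :=
  if h : mismatches w ≠ 0 ∧ (allowedFlips w).Nonempty then
    (PMF.uniformOfFinset (allowedFlips w) h.2).map (flip w)
  else
    PMF.pure w

/-- The distribution of the cooling process at time `t`, started from `w`. -/
noncomputable def coolDist (w : Word) : ℕ → PMF Word
  | 0 => PMF.pure w
  | t + 1 => (coolDist w t).bind coolStep

/-- The expected convergence time `E[T | w₀ = w]` of the cooling process started at `w`,
where `T = min {t ≥ 0 : E(w_t) = 0}`.  Since mismatch-free configurations are absorbing,
`E[T] = ∑_{t ≥ 0} P(T > t) = ∑_{t ≥ 0} P(E(w_t) ≠ 0)`. -/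
noncomputable def expConvTime (w : Word) : ℝ≥0∞ :=
  ∑' t : ℕ, (coolDist w t).toOuterMeasure {v | mismatches v ≠ 0}

/-- The factor of `w` starting at position `s` (0-indexed) of length `l`. -/
def factor (w : Word) (s l : ℕ) : Word := (w.drop s).take l

/-- The height `|p|₁ - |p|₂` of the length-`s` prefix `p` of `w`. -/
def height (w : Word) (s : ℕ) : ℤ :=
  ((w.take s).count true : ℤ) - (w.take s).count false

/-- The occurrence `(s, l)` is a positive Dyck factor of `w`. -/
def IsPosDyckAt (w : Word) (s l : ℕ) : Prop :=
  0 < l ∧ s + l ≤ w.length ∧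
  (factor w s l).count true = (factor w s l).count false ∧
  (∀ i ≤ l, ((factor w s l).take i).count false ≤ ((factor w s l).take i).count true) ∧
  0 ≤ height w s

/-- The occurrence `(s, l)` is a negative Dyck factor of `w`. -/
def IsNegDyckAt (w : Word) (s l : ℕ) : Prop :=
  0 < l ∧ s + l ≤ w.length ∧
  (factor w s l).count true = (factor w s l).count false ∧
  (∀ i ≤ l, ((factor w s l).take i).count true ≤ ((factor w s l).take i).count false) ∧
  height w s ≤ 0

/-- The occurrence `(s, l)` is a Dyck factor of `w` (positive or negative). -/
def IsDyckAt (w : Word) (s l : ℕ) : Prop :=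
  IsPosDyckAt w s l ∨ IsNegDyckAt w s l

/-- The occurrence `(s, l)` is a maximal Dyck factor of `w`: no Dyck factor of `w`
with the same height contains it (other than itself). -/
def IsMaxDyckAt (w : Word) (s l : ℕ) : Prop :=
  IsDyckAt w s l ∧
  ∀ s' l', IsDyckAt w s' l' → height w s' = height w s → s' ≤ s → s + l ≤ s' + l' →
    s' = s ∧ l' = l

/-- The set `DF(w)` of (occurrences of) maximal Dyck factors of `w`,
encoded as pairs (starting position, length). -/
noncomputable def DF (w : Word) : Finset (ℕ × ℕ) :=
  ((Finset.range (w.length + 1)) ×ˢ (Finset.range (w.length + 1))).filter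
    (fun sl => IsMaxDyckAt w sl.1 sl.2)

/-- The variant `φ_α(w) = ∑_{v ∈ DF(w)} (1 + |v|₁)^α`. -/
noncomputable def phi (α : ℝ) (w : Word) : ℝ :=
  ∑ sl ∈ DF w, (1 + ((factor w sl.1 sl.2).count true : ℝ)) ^ α

/-- The volume `V(w) = (1/2) ∑_{k=1}^{|w|} |h_{k-1}(w) + h_k(w)|`: the area between
the broken-line representation of `w` and the horizontal axis. -/
noncomputable def volume (w : Word) : ℝ :=
  (1 / 2) * ∑ k ∈ Finset.range w.length, |((height w k + height w (k + 1) : ℤ) : ℝ)|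

/-- The weight of a maximal Dyck factor of half-length `m`, extended by zero to `m ≤ 0`. -/
noncomputable def dyckWeight (α : ℝ) (m : ℤ) : ℝ := if m ≤ 0 then 0 else (1 + (m : ℝ)) ^ α

/-- The part of the loss of a peak flip that is charged to one of the two sides of the peak. -/
noncomputable def sideLoss (α : ℝ) (m : ℤ) : ℝ :=
  if m ≤ 0 then (2 : ℝ) ^ α / 2 else dyckWeight α (m + 1) - dyckWeight α m

/-- The average decrease of the variant guaranteed for each allowed flip. -/
noncomputable def drift (α : ℝ) (n : ℕ) : ℝ := α * (1 - α) / 2 * (n : ℝ) ^ (α - 2)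

theorem rpow_sub_rpow_symm_ge {β y : ℝ} (hβ : 0 ≤ β) (hy : 0 ≤ y) (hy1 : y < 1) :
    2 * β * y ≤ (1 - y) ^ (-β) - (1 + y) ^ (-β) := by
  have key : MonotoneOn (fun y : ℝ => (1 - y) ^ (-β) - (1 + y) ^ (-β) - 2 * β * y)
      (Set.Ico 0 1) := by
    have hd : ∀ x ∈ Set.Ico (0 : ℝ) 1, HasDerivAt
        (fun y : ℝ => (1 - y) ^ (-β) - (1 + y) ^ (-β) - 2 * β * y)
        ((-1) * (-β) * (1 - x) ^ (-β - 1) - 1 * (-β) * (1 + x) ^ (-β - 1) - 2 * β * 1) x := by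
      intro x hx
      have h1 : HasDerivAt (fun y : ℝ => 1 - y) (-1) x := by
        simpa using (hasDerivAt_id x).const_sub 1
      have h2 : HasDerivAt (fun y : ℝ => 1 + y) 1 x := by
        simpa using (hasDerivAt_id x).const_add 1
      exact ((h1.rpow_const (Or.inl (by linarith [hx.2]))).sub
        (h2.rpow_const (Or.inl (by linarith [hx.1])))).sub ((hasDerivAt_id x).const_mul (2 * β))
    refine monotoneOn_of_hasDerivWithinAt_nonneg (convex_Ico 0 1)
      (fun x hx => (hd x hx).continuousAt.continuousWithinAt)
      (fun x hx => (hd x (interior_subset hx)).hasDerivWithinAt) ?_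
    intro x hx
    obtain ⟨hx0, hx1⟩ := interior_subset hx
    set u := (1 - x) ^ (-β - 1)
    set v := (1 + x) ^ (-β - 1)
    have hu : 0 < u := Real.rpow_pos_of_pos (by linarith) _
    have hv : 0 < v := Real.rpow_pos_of_pos (by linarith) _
    have huv : 1 ≤ u * v := by
      rw [← Real.mul_rpow (by linarith) (by linarith)]
      exact Real.one_le_rpow_of_pos_of_le_one_of_nonpos (by nlinarith) (by nlinarith)
        (by linarith)
    have : 2 ≤ u + v := by nlinarith [sq_nonneg (u - v)]
    nlinarith
  have := key (Set.mem_Ico.2 ⟨le_rfl, zero_lt_one⟩) (Set.mem_Ico.2 ⟨hy, hy1⟩) hy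
  simp at this
  linarith

theorem rpow_add_rpow_symm_le {α y : ℝ} (h0 : 0 ≤ α) (h1 : α ≤ 1) (hy : 0 ≤ y) (hy1 : y < 1) :
    (1 + y) ^ α + (1 - y) ^ α ≤ 2 - α * (1 - α) * y ^ 2 := by
  have key : AntitoneOn (fun y : ℝ => (1 + y) ^ α + (1 - y) ^ α + α * (1 - α) * y ^ 2)
      (Set.Ico 0 1) := by
    have hd : ∀ x ∈ Set.Ico (0 : ℝ) 1, HasDerivAt
        (fun y : ℝ => (1 + y) ^ α + (1 - y) ^ α + α * (1 - α) * y ^ 2)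
        (1 * α * (1 + x) ^ (α - 1) + (-1) * α * (1 - x) ^ (α - 1)
          + α * (1 - α) * ((2 : ℕ) * x ^ (2 - 1))) x := by
      intro x hx
      have h1 : HasDerivAt (fun y : ℝ => 1 - y) (-1) x := by
        simpa using (hasDerivAt_id x).const_sub 1
      have h2 : HasDerivAt (fun y : ℝ => 1 + y) 1 x := by
        simpa using (hasDerivAt_id x).const_add 1
      exact ((h2.rpow_const (Or.inl (by linarith [hx.1]))).add
        (h1.rpow_const (Or.inl (by linarith [hx.2])))).add ((hasDerivAt_pow 2 x).const_mul _)
    refine antitoneOn_of_hasDerivWithinAt_nonpos (convex_Ico 0 1)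
      (fun x hx => (hd x hx).continuousAt.continuousWithinAt)
      (fun x hx => (hd x (interior_subset hx)).hasDerivWithinAt) ?_
    intro x hx
    obtain ⟨hx0, hx1⟩ := interior_subset hx
    have := rpow_sub_rpow_symm_ge (β := 1 - α) (by linarith) hx0 hx1
    rw [neg_sub] at this
    norm_num
    nlinarith
  have := key (Set.mem_Ico.2 ⟨le_rfl, zero_lt_one⟩) (Set.mem_Ico.2 ⟨hy, hy1⟩) hy
  simp at this
  linarith

theorem rpow_second_difference_le {α x : ℝ} (h0 : 0 ≤ α) (h1 : α ≤ 1) (hx : 1 < x) :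
    (x + 1) ^ α + (x - 1) ^ α - 2 * x ^ α ≤ -(α * (1 - α)) * x ^ (α - 2) := by
  have hx0 : 0 < x := by linarith
  have h := rpow_add_rpow_symm_le h0 h1 (y := x⁻¹) (by positivity) (inv_lt_one_of_one_lt₀ hx)
  have e1 : x + 1 = x * (1 + x⁻¹) := by field_simp
  have e2 : x - 1 = x * (1 - x⁻¹) := by field_simp
  have hlt : x⁻¹ < 1 := inv_lt_one_of_one_lt₀ hx
  have hp : 0 < x ^ α := Real.rpow_pos_of_pos hx0 _
  rw [e1, e2, Real.mul_rpow hx0.le (by positivity), Real.mul_rpow hx0.le (by linarith),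
    Real.rpow_sub hx0, Real.rpow_two]
  have : x ^ α / x ^ 2 = x ^ α * x⁻¹ ^ 2 := by field_simp
  rw [this]
  nlinarith

theorem drift_nonneg {α : ℝ} (hα : α ∈ Set.Ioo (0 : ℝ) 1) (n : ℕ) : 0 ≤ drift α n := by
  have h0 := hα.1
  have h1 := hα.2
  have : 0 < 1 - α := by linarith
  unfold drift
  positivity

theorem drift_le {α : ℝ} (hα : α ∈ Set.Ioo (0 : ℝ) 1) {n : ℕ} (hn : 2 ≤ n) :
    drift α n ≤ (1 - α) / 8 * (2 : ℝ) ^ α := by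
  have h0 := hα.1
  have h1 := hα.2
  have : (n : ℝ) ^ (α - 2) ≤ (2 : ℝ) ^ (α - 2) :=
    Real.rpow_le_rpow_of_nonpos (by norm_num) (by exact_mod_cast hn) (by linarith)
  rw [Real.rpow_sub (by norm_num : (0 : ℝ) < 2) α 2, Real.rpow_two] at this
  have hp : 0 < (2 : ℝ) ^ α := by positivity
  have hq : 0 ≤ α * (1 - α) / 2 := by nlinarith
  unfold drift
  calc _ ≤ α * (1 - α) / 2 * (2 ^ α / 2 ^ 2) := by gcongr
    _ = α * ((1 - α) / 8 * 2 ^ α) := by ring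
    _ ≤ 1 * ((1 - α) / 8 * 2 ^ α) := by
      have : 0 < 1 - α := by linarith
      gcongr
    _ = _ := one_mul _

theorem dyckWeight_of_pos (α : ℝ) {m : ℤ} (hm : 0 < m) : dyckWeight α m = (1 + (m : ℝ)) ^ α :=
  if_neg (not_le.2 hm)

theorem dyckWeight_zero (α : ℝ) : dyckWeight α 0 = 0 := if_pos le_rfl

theorem dyckWeight_one (α : ℝ) : dyckWeight α 1 = 2 ^ α := by
  rw [dyckWeight_of_pos α one_pos]; norm_num

theorem rpow_increment_antitone {α x y : ℝ} (hα : α ∈ Set.Ioo (0 : ℝ) 1) (hx : 0 < x)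
    (hxy : x ≤ y) : (y + 1) ^ α - y ^ α ≤ (x + 1) ^ α - x ^ α := by
  have key : AntitoneOn (fun y : ℝ => (y + 1) ^ α - y ^ α) (Set.Ioi 0) := by
    have hd : ∀ x ∈ Set.Ioi (0 : ℝ), HasDerivAt (fun y : ℝ => (y + 1) ^ α - y ^ α)
        (1 * α * (x + 1) ^ (α - 1) - 1 * α * x ^ (α - 1)) x := by
      intro x hx
      have hx : 0 < x := hx
      exact (((hasDerivAt_id x).add_const 1).rpow_const (Or.inl (by simp; linarith))).sub
        ((hasDerivAt_id x).rpow_const (Or.inl hx.ne'))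
    refine antitoneOn_of_hasDerivWithinAt_nonpos (convex_Ioi 0)
      (fun x hx => (hd x hx).continuousAt.continuousWithinAt)
      (fun x hx => (hd x (interior_subset hx)).hasDerivWithinAt) ?_
    intro x hx
    have hx : 0 < x := interior_subset hx
    have : (x + 1) ^ (α - 1) ≤ x ^ (α - 1) :=
      Real.rpow_le_rpow_of_nonpos hx (by linarith) (by linarith [hα.2])
    have := hα.1
    nlinarith
  exact key hx (hx.trans_le hxy) hxy

theorem extension_add_drift_le {α : ℝ} (hα : α ∈ Set.Ioo (0 : ℝ) 1) {n : ℕ} (hn : 2 ≤ n)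
    {b b' : ℤ} (hb' : 0 ≤ b') (hbb : b' < b) (hbn : b + 1 ≤ n) :
    dyckWeight α (b + 1) - dyckWeight α b + drift α n ≤ sideLoss α b' - drift α n := by
  have h0 := hα.1
  have h1 := hα.2
  rw [dyckWeight_of_pos α (by omega : 0 < b + 1), dyckWeight_of_pos α (by omega : 0 < b)]
  push_cast
  have hb1 : (1 : ℝ) ≤ b := by exact_mod_cast (by omega : 1 ≤ b)
  rw [sideLoss]
  split_ifs with h
  · have hinc := rpow_increment_antitone hα (x := 2) (y := 1 + b) (by norm_num) (by linarith)
    have hc := drift_le hα hn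
    have e : (2 : ℝ) + 1 = 2 * (1 + 1 / 2) := by norm_num
    have hB : (1 + 1 / 2 : ℝ) ^ α ≤ 1 + α * (1 / 2) :=
      rpow_one_add_le_one_add_mul_self (by norm_num) h0.le h1.le
    rw [e, Real.mul_rpow (by norm_num) (by norm_num)] at hinc
    have hp : 0 < (2 : ℝ) ^ α := by positivity
    rw [← add_assoc]
    nlinarith
  · rw [dyckWeight_of_pos α (by omega : 0 < b' + 1), dyckWeight_of_pos α (by omega : 0 < b')]
    push_cast
    have hb'0 : (0 : ℝ) ≤ b' := by exact_mod_cast hb'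
    have hbb' : (b' : ℝ) + 1 ≤ b := by exact_mod_cast hbb
    have hinc := rpow_increment_antitone hα (x := 1 + b') (y := b) (by linarith) (by linarith)
    have hsd := rpow_second_difference_le h0.le h1.le (x := 1 + b) (by linarith)
    have hmono : (n : ℝ) ^ (α - 2) ≤ (1 + (b : ℝ)) ^ (α - 2) :=
      Real.rpow_le_rpow_of_nonpos (by linarith)
        (by rw [add_comm]; exact_mod_cast hbn) (by linarith)
    have hq : 0 ≤ α * (1 - α) := by nlinarith
    have := mul_le_mul_of_nonneg_left hmono hq
    unfold drift
    rw [← add_assoc, ← add_assoc]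
    have e1 : (1 : ℝ) + b - 1 = b := by ring
    have e2 : (b : ℝ) + 1 = 1 + b := by ring
    rw [e1] at hsd
    rw [e2] at hinc
    linarith

theorem drift_le_sideLoss {α : ℝ} (hα : α ∈ Set.Ioo (0 : ℝ) 1) {n : ℕ} (hn : 2 ≤ n)
    {b : ℤ} (hbn : b + 1 ≤ n) : drift α n ≤ sideLoss α b := by
  have h0 := hα.1
  have h1 := hα.2
  have hc := drift_le hα hn
  have hp : 0 < (2 : ℝ) ^ α := by positivity
  rw [sideLoss]
  split_ifs with h
  · nlinarith
  · rw [dyckWeight_of_pos α (by omega : 0 < b + 1), dyckWeight_of_pos α (by omega : 0 < b)]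
    push_cast
    have hb1 : (1 : ℝ) ≤ b := by exact_mod_cast (by omega : 1 ≤ b)
    have hbn' : (b : ℝ) + 1 ≤ n := by exact_mod_cast hbn
    have hinc := rpow_increment_antitone hα (x := 1 + b) (y := n) (by linarith) (by linarith)
    have hn0 : (0 : ℝ) < n := by linarith
    have hn2 : (2 : ℝ) ≤ n := by exact_mod_cast hn
    -- the Bernoulli inequality applied to `n / (n + 1)`
    have hB : (1 + (-(1 / ((n : ℝ) + 1)))) ^ α ≤ 1 + α * (-(1 / ((n : ℝ) + 1))) :=
      rpow_one_add_le_one_add_mul_self (by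
        rw [neg_le_neg_iff, div_le_one (by linarith)]; linarith) h0.le h1.le
    have e : (n : ℝ) = (n + 1) * (1 + (-(1 / ((n : ℝ) + 1)))) := by field_simp; ring
    have hnn : (n : ℝ) ^ α = (n + 1 : ℝ) ^ α * (1 + (-(1 / ((n : ℝ) + 1)))) ^ α := by
      rw [← Real.mul_rpow (by linarith)]
      · rw [← e]
      · have : 1 / ((n : ℝ) + 1) ≤ 1 := by rw [div_le_one (by linarith)]; linarith
        linarith
    have hp1 : 0 < (n + 1 : ℝ) ^ α := by positivity
    have hge : (n : ℝ) ^ α ≤ (n + 1 : ℝ) ^ α := by gcongr; linarith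
    have step : α * ((n + 1 : ℝ) ^ α / (n + 1)) ≤ (n + 1 : ℝ) ^ α - (n : ℝ) ^ α := by
      have := mul_le_mul_of_nonneg_left hB hp1.le
      rw [← hnn] at this
      have e2 : (n + 1 : ℝ) ^ α * (1 + α * (-(1 / ((n : ℝ) + 1))))
        = (n + 1 : ℝ) ^ α - α * ((n + 1 : ℝ) ^ α / (n + 1)) := by ring
      linarith
    have step2 : (n : ℝ) ^ (α - 2) ≤ (n + 1 : ℝ) ^ α / (n + 1) := by
      rw [Real.rpow_sub hn0, Real.rpow_two]
      gcongr
      nlinarith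
    have hq : 0 ≤ (n : ℝ) ^ (α - 2) := by positivity
    unfold drift
    rw [← add_assoc]
    have := mul_le_mul_of_nonneg_left step2 h0.le
    have h5 : α * (1 - α) / 2 * (n : ℝ) ^ (α - 2) ≤ α * (n : ℝ) ^ (α - 2) := by
      have : α * (1 - α) / 2 ≤ α := by nlinarith
      gcongr
    linarith

theorem merge_add_drift_nonpos {α : ℝ} (hα : α ∈ Set.Ioo (0 : ℝ) 1) {n : ℕ} (hn : 2 ≤ n)
    {a b : ℤ} (ha : 0 < a) (hb : 0 < b) :
    dyckWeight α (a + b + 1) - dyckWeight α a - dyckWeight α b + drift α n ≤ 0 := by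
  wlog hab : a ≤ b generalizing a b
  · have := this hb ha (by omega)
    rw [add_comm b a] at this
    linarith
  have h0 := hα.1
  have h1 := hα.2
  rw [dyckWeight_of_pos α (by omega : 0 < a + b + 1), dyckWeight_of_pos α ha,
    dyckWeight_of_pos α hb]
  push_cast
  have ha1 : (1 : ℝ) ≤ a := by exact_mod_cast ha
  have hb1 : (a : ℝ) ≤ b := by exact_mod_cast hab
  set x : ℝ := 1 + a
  set y : ℝ := 1 + b
  have hx : 0 < x := by simp only [x]; linarith
  have hxy : x ≤ y := by simp only [x, y]; linarith
  have hy : 0 < y := by linarith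
  have e : 1 + ((a : ℝ) + b + 1) = y * (1 + x / y) := by
    rw [mul_add, mul_div_cancel₀ _ hy.ne']; simp only [x, y]; ring
  have hxy0 : 0 ≤ x / y := by positivity
  rw [e, Real.mul_rpow hy.le (by positivity)]
  have hB : (1 + x / y) ^ α ≤ 1 + α * (x / y) :=
    rpow_one_add_le_one_add_mul_self (by linarith) h0.le h1.le
  have hyp : 0 < y ^ α := by positivity
  have hratio : x / y ≤ (x / y) ^ α :=
    Real.self_le_rpow_of_le_one hxy0 ((div_le_one hy).2 hxy) h1.le
  rw [Real.div_rpow hx.le hy.le] at hratio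
  have h2x : (2 : ℝ) ^ α ≤ x ^ α := by gcongr; simp only [x]; linarith
  have hc := drift_le hα hn
  have hm : y ^ α * (1 + x / y) ^ α ≤ y ^ α + α * x ^ α := by
    calc _ ≤ y ^ α * (1 + α * (x ^ α / y ^ α)) := by
          gcongr
          exact hB.trans (by gcongr)
      _ = _ := by field_simp
  have hp : 0 < (2 : ℝ) ^ α := by positivity
  nlinarith

/-- The height function of a balanced word of length `N`, extended to `ℤ` by letters `1` before
the word and letters `2` after it. -/
structure IsPath (N : ℤ) (H : ℤ → ℤ) : Prop where
  length_nonneg : 0 ≤ N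
  step : ∀ t, H (t + 1) = H t + 1 ∨ H (t + 1) = H t - 1
  left : ∀ t ≤ 0, H t = t
  right : ∀ t, N ≤ t → H t = N - t

/-- The path read from right to left. -/
def reversePath (N : ℤ) (H : ℤ → ℤ) (t : ℤ) : ℤ := H (N - t)

theorem IsPath.reverse {N : ℤ} {H : ℤ → ℤ} (hH : IsPath N H) : IsPath N (reversePath N H) where
  length_nonneg := hH.length_nonneg
  step t := by
    have := hH.step (N - (t + 1))
    simp only [reversePath]
    rw [show N - (t + 1) + 1 = N - t by ring] at this
    omega
  left t ht := by simp only [reversePath]; rw [hH.right _ (by omega)]; omega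
  right t ht := by simp only [reversePath]; rw [hH.left _ (by omega)]

theorem IsPath.parity {N : ℤ} {H : ℤ → ℤ} (hH : IsPath N H) (t : ℤ) (m : ℕ) :
    (H (t + m) - H t - m) % 2 = 0 := by
  induction m with
  | zero => simp
  | succ m ih =>
    have := hH.step (t + m)
    push_cast
    rw [← add_assoc]
    omega

theorem IsPath.bounds_of_nonneg {N : ℤ} {H : ℤ → ℤ} (hH : IsPath N H) {t : ℤ} (ht : 0 ≤ H t) :
    0 ≤ t ∧ t ≤ N := by
  constructor
  · by_contra h
    have := hH.left t (by omega)
    omega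
  · by_contra h
    have := hH.right t (by omega)
    omega

/-- The distance from `q` to the last position reachable to the right without going below
height `H q`. -/
noncomputable def rightExtent (H : ℤ → ℤ) (q : ℤ) : ℕ := sInf {m : ℕ | H (q + m + 1) < H q}

/-- The position `e` is the right end of the maximal nonnegative excursion from `q`. -/
def IsRightEnd (H : ℤ → ℤ) (q e : ℤ) : Prop :=
  q ≤ e ∧ H e = H q ∧ (∀ u, q ≤ u → u ≤ e → H q ≤ H u) ∧ H (e + 1) < H q

/-- The position `e` is the left end of the maximal nonnegative excursion to `q`. -/
def IsLeftEnd (H : ℤ → ℤ) (q e : ℤ) : Prop :=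
  e ≤ q ∧ H e = H q ∧ (∀ u, e ≤ u → u ≤ q → H q ≤ H u) ∧ H (e - 1) < H q

theorem IsPath.isRightEnd {N : ℤ} {H : ℤ → ℤ} (hH : IsPath N H) {q : ℤ} (hq : 0 ≤ H q) :
    IsRightEnd H q (q + rightExtent H q) := by
  have hne : {m : ℕ | H (q + m + 1) < H q}.Nonempty := by
    have hb := hH.bounds_of_nonneg hq
    refine ⟨(N - q).toNat, ?_⟩
    have := hH.right (q + (N - q).toNat + 1) (by omega)
    simp only [Set.mem_ofPred_eq]
    omega
  have hmem : H (q + rightExtent H q + 1) < H q := Nat.sInf_mem hne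
  have hlt : ∀ m : ℕ, m < rightExtent H q → H q ≤ H (q + m + 1) := fun m hm =>
    not_lt.1 (Nat.notMem_of_lt_sInf hm)
  have hall : ∀ u, q ≤ u → u ≤ q + rightExtent H q → H q ≤ H u := by
    intro u h1 h2
    rcases h1.eq_or_lt with rfl | h1
    · rfl
    · have := hlt (u - q - 1).toNat (by omega)
      rwa [show q + ((u - q - 1).toNat : ℤ) + 1 = u by omega] at this
  refine ⟨by omega, ?_, hall, hmem⟩
  have h1 := hall (q + rightExtent H q) (by omega) le_rfl
  have h2 := hH.step (q + rightExtent H q)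
  omega

theorem IsRightEnd.unique {H : ℤ → ℤ} {q e e' : ℤ} (h : IsRightEnd H q e)
    (h' : IsRightEnd H q e') : e = e' := by
  obtain ⟨h1, -, h3, h4⟩ := h
  obtain ⟨h1', -, h3', h4'⟩ := h'
  by_contra hne
  rcases lt_or_gt_of_ne hne with hlt | hlt
  · have := h3' (e + 1) (by omega) (by omega)
    omega
  · have := h3 (e' + 1) (by omega) (by omega)
    omega

theorem IsPath.isLeftEnd {N : ℤ} {H : ℤ → ℤ} (hH : IsPath N H) {q : ℤ} (hq : 0 ≤ H q) :
    IsLeftEnd H q (q - rightExtent (reversePath N H) (N - q)) := by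
  have hq' : reversePath N H (N - q) = H q := by simp [reversePath]
  obtain ⟨h1, h2, h3, h4⟩ := hH.reverse.isRightEnd (q := N - q) (by rwa [hq'])
  rw [hq'] at h2 h3 h4
  simp only [reversePath] at h2 h4
  refine ⟨by omega, ?_, fun u hu1 hu2 => ?_, ?_⟩
  · rw [← h2]; congr 1; omega
  · have := h3 (N - u) (by omega) (by omega)
    simpa [reversePath] using this
  · convert h4 using 2; omega

theorem IsLeftEnd.unique {H : ℤ → ℤ} {q e e' : ℤ} (h : IsLeftEnd H q e)
    (h' : IsLeftEnd H q e') : e = e' := by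
  obtain ⟨h1, -, h3, h4⟩ := h
  obtain ⟨h1', -, h3', h4'⟩ := h'
  by_contra hne
  rcases lt_or_gt_of_ne hne with hlt | hlt
  · have := h3 (e' - 1) (by omega) (by omega)
    omega
  · have := h3' (e - 1) (by omega) (by omega)
    omega

theorem IsPath.even_rightExtent {N : ℤ} {H : ℤ → ℤ} (hH : IsPath N H) {q : ℤ} (hq : 0 ≤ H q) :
    rightExtent H q % 2 = 0 := by
  have h1 := (hH.isRightEnd hq).2.1
  have h2 := hH.parity q (rightExtent H q)
  omega

/-- Half the length of the excursion to the right of the flip site `p`. -/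
noncomputable def rightHalf (H : ℤ → ℤ) (p : ℤ) : ℤ := (rightExtent H (p + 1) : ℤ) / 2

/-- Half the length of the excursion to the left of the flip site `p`. -/
noncomputable def leftHalf (N : ℤ) (H : ℤ → ℤ) (p : ℤ) : ℤ := rightHalf (reversePath N H) (N - p)

theorem IsPath.isRightEnd_rightHalf {N : ℤ} {H : ℤ → ℤ} (hH : IsPath N H) {p : ℤ}
    (hp : 0 ≤ H (p + 1)) : IsRightEnd H (p + 1) (p + 1 + 2 * rightHalf H p) := by
  have := hH.isRightEnd hp
  have he := hH.even_rightExtent hp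
  unfold rightHalf
  convert this using 1
  omega

theorem IsPath.isLeftEnd_leftHalf {N : ℤ} {H : ℤ → ℤ} (hH : IsPath N H) {p : ℤ}
    (hp : 0 ≤ H (p - 1)) : IsLeftEnd H (p - 1) (p - 1 - 2 * leftHalf N H p) := by
  have := hH.isLeftEnd hp
  have he := hH.reverse.even_rightExtent (q := N - (p - 1)) (by simpa [reversePath] using hp)
  unfold leftHalf rightHalf
  convert this using 1
  rw [show N - p + 1 = N - (p - 1) by ring]
  omega

theorem rightHalf_nonneg (H : ℤ → ℤ) (p : ℤ) : 0 ≤ rightHalf H p := by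
  unfold rightHalf; omega

theorem leftHalf_nonneg (N : ℤ) (H : ℤ → ℤ) (p : ℤ) : 0 ≤ leftHalf N H p := rightHalf_nonneg _ _

/-- The interval `[s, t]` carries a maximal positive Dyck factor of the path. -/
def IsRun (H : ℤ → ℤ) (s t : ℤ) : Prop :=
  s < t ∧ 0 ≤ H s ∧ H t = H s ∧ (∀ u, s ≤ u → u ≤ t → H s ≤ H u) ∧
    H (s - 1) < H s ∧ H (t + 1) < H s

/-- The set of maximal positive Dyck factors, as pairs of end points. -/
noncomputable def runs (N : ℤ) (H : ℤ → ℤ) : Finset (ℤ × ℤ) :=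
  (Finset.Icc 0 N ×ˢ Finset.Icc 0 N).filter fun st => IsRun H st.1 st.2

/-- The contribution of the positive Dyck factors to the variant. -/
noncomputable def posVariant (α : ℝ) (N : ℤ) (H : ℤ → ℤ) : ℝ :=
  ∑ st ∈ runs N H, dyckWeight α ((st.2 - st.1) / 2)

theorem IsPath.mem_runs {N : ℤ} {H : ℤ → ℤ} (hH : IsPath N H) {st : ℤ × ℤ} :
    st ∈ runs N H ↔ IsRun H st.1 st.2 := by
  simp only [runs, Finset.mem_filter, Finset.mem_product, Finset.mem_Icc, and_iff_right_iff_imp]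
  rintro ⟨h1, h2, h3, -⟩
  exact ⟨hH.bounds_of_nonneg h2, hH.bounds_of_nonneg (h3 ▸ h2)⟩

/-- The path obtained by the flip at `p`. -/
noncomputable def flipPath (H : ℤ → ℤ) (p : ℤ) : ℤ → ℤ :=
  Function.update H p (H (p - 1) + H (p + 1) - H p)

theorem flipPath_self (H : ℤ → ℤ) (p : ℤ) : flipPath H p p = H (p - 1) + H (p + 1) - H p := by
  simp [flipPath]

theorem flipPath_of_ne (H : ℤ → ℤ) {p t : ℤ} (h : t ≠ p) : flipPath H p t = H t := by
  simp [flipPath, h]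

theorem flipPath_flipPath (H : ℤ → ℤ) (p : ℤ) : flipPath (flipPath H p) p = H := by
  funext t
  by_cases h : t = p
  · subst h
    rw [flipPath_self, flipPath_self, flipPath_of_ne _ (by omega), flipPath_of_ne _ (by omega)]
    omega
  · rw [flipPath_of_ne _ h, flipPath_of_ne _ h]

theorem IsPath.flipPath {N : ℤ} {H : ℤ → ℤ} (hH : IsPath N H) {p : ℤ} (h0 : 0 < p) (hN : p < N) :
    IsPath N (flipPath H p) where
  length_nonneg := hH.length_nonneg
  step t := by
    have h1 := hH.step t
    by_cases e1 : t = p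
    · subst e1
      rw [flipPath_self, flipPath_of_ne _ (by omega)]
      have h2 := hH.step (t - 1)
      rw [sub_add_cancel] at h2
      omega
    · by_cases e2 : t + 1 = p
      · subst e2
        rw [flipPath_self, flipPath_of_ne _ (by omega)]
        have h2 := hH.step (t + 1)
        rw [add_sub_cancel_right]
        omega
      · rw [flipPath_of_ne _ e1, flipPath_of_ne _ e2]; exact h1
  left t ht := by rw [flipPath_of_ne _ (by omega)]; exact hH.left t ht
  right t ht := by rw [flipPath_of_ne _ (by omega)]; exact hH.right t ht

theorem isRun_of_isRun_valleyFlip {H H' : ℤ → ℤ} {p s₀ t₀ s t : ℤ}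
    (hp : H (p - 1) = H (p + 1)) (hv : H p = H (p + 1) - 1)
    (hp' : H' p = H p + 2) (hne : ∀ t, t ≠ p → H' t = H t)
    (hl : IsLeftEnd H (p - 1) s₀) (hr : IsRightEnd H (p + 1) t₀)
    (h : IsRun H' s t) (h3 : ¬(s = s₀ ∧ t = t₀)) : IsRun H s t := by
  obtain ⟨r1, r2, r3, r4, r5, r6⟩ := h
  have g1 := hne (p - 1) (by omega)
  have g2 := hne (p + 1) (by omega)
  have hs : s ≠ p := by
    rintro rfl
    have := r4 (s + 1) (by omega) (by omega)
    omega
  have ht : t ≠ p := by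
    rintro rfl
    have := r4 (t - 1) (by omega) (by omega)
    omega
  have hs1 : s - 1 ≠ p := by
    intro e
    rw [e, show s = p + 1 by omega] at r5
    omega
  have ht1 : t + 1 ≠ p := by
    intro e
    rw [← r3, e, show t = p - 1 by omega] at r6
    omega
  rw [hne s hs] at r2 r3 r5 r6
  rw [hne t ht] at r3
  rw [hne _ hs1] at r5
  rw [hne _ ht1] at r6
  have r4' : ∀ u, s ≤ u → u ≤ t → u ≠ p → H s ≤ H u := fun u h1 h2 h3 => by
    have := r4 u h1 h2
    rwa [hne s hs, hne u h3] at this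
  refine ⟨r1, r2, r3, fun u h1 h2 => ?_, r5, r6⟩
  by_cases hu : u = p
  · subst hu
    have a1 := r4' (u - 1) (by omega) (by omega) (by omega)
    by_contra hlt
    have hk : H s = H (u + 1) := by omega
    refine h3 ⟨IsLeftEnd.unique (q := u - 1) ⟨by omega, by omega, fun x hx1 hx2 => ?_, by omega⟩ hl,
      IsRightEnd.unique (q := u + 1) ⟨by omega, by omega, fun x hx1 hx2 => ?_, by omega⟩ hr⟩
    · have := r4' x hx1 (by omega) (by omega)
      omega
    · have := r4' x (by omega) hx2 (by omega)
      omega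
  · exact r4' u h1 h2 hu

theorem isRun_valleyFlip_of_isRun {H H' : ℤ → ℤ} {p s₀ t₀ s t : ℤ}
    (hp : H (p - 1) = H (p + 1)) (hv : H p = H (p + 1) - 1)
    (hp' : H' p = H p + 2) (hne : ∀ t, t ≠ p → H' t = H t)
    (hl : IsLeftEnd H (p - 1) s₀) (hr : IsRightEnd H (p + 1) t₀)
    (h : IsRun H s t) (h1 : ¬(s = s₀ ∧ t = p - 1)) (h2 : ¬(s = p + 1 ∧ t = t₀)) :
    IsRun H' s t := by
  obtain ⟨r1, r2, r3, r4, r5, r6⟩ := h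
  have hs : s ≠ p := by rintro rfl; omega
  have ht : t ≠ p := by rintro rfl; omega
  have hs1 : s - 1 ≠ p := by
    intro e
    obtain rfl : s = p + 1 := by omega
    exact h2 ⟨rfl, IsRightEnd.unique ⟨by omega, r3, r4, r6⟩ hr⟩
  have ht1 : t + 1 ≠ p := by
    intro e
    obtain rfl : t = p - 1 := by omega
    exact h1 ⟨IsLeftEnd.unique ⟨by omega, r3.symm, by rwa [r3], by omega⟩ hl, rfl⟩
  rw [IsRun, hne s hs, hne t ht, hne _ hs1, hne _ ht1]
  refine ⟨r1, r2, r3, fun u hu1 hu2 => ?_, r5, r6⟩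
  have := r4 u hu1 hu2
  by_cases hu : u = p
  · subst hu; omega
  · rwa [hne u hu]

/-- Raising a valley at a nonnegative height merges the excursions on its two sides. -/
theorem posVariant_valleyFlip (α : ℝ) {N : ℤ} {H : ℤ → ℤ} (hH : IsPath N H) {p : ℤ}
    (h0 : 0 < p) (hN : p < N) (hp : H (p - 1) = H (p + 1)) (hv : H p = H (p + 1) - 1)
    (hk : 0 ≤ H (p + 1)) :
    posVariant α N (flipPath H p) - posVariant α N H =
      dyckWeight α (leftHalf N H p + rightHalf H p + 1) - dyckWeight α (leftHalf N H p)
        - dyckWeight α (rightHalf H p) := by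
  have hl := hH.isLeftEnd_leftHalf (p := p) (by omega)
  have hr := hH.isRightEnd_rightHalf hk
  have ha := leftHalf_nonneg N H p
  have hb := rightHalf_nonneg H p
  set a := leftHalf N H p
  set b := rightHalf H p
  set s₀ := p - 1 - 2 * a with hs₀
  set t₀ := p + 1 + 2 * b with ht₀
  have hH' := hH.flipPath h0 hN
  have hp' : flipPath H p p = H p + 2 := by rw [flipPath_self]; omega
  have hne : ∀ t, t ≠ p → flipPath H p t = H t := fun t ht => flipPath_of_ne H ht
  set H' := flipPath H p
  have mem_left : (s₀, p - 1) ∈ runs N H ↔ 0 < a := by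
    rw [hH.mem_runs]
    refine ⟨fun h => by have := h.1; simp only at this; omega, fun h => ?_⟩
    obtain ⟨l1, l2, l3, l4⟩ := hl
    refine ⟨by simp only; omega, by simp only; omega, by simp only; omega, ?_, by simp only; omega,
      by simp only [sub_add_cancel]; omega⟩
    simpa only [l2] using l3
  have mem_right : (p + 1, t₀) ∈ runs N H ↔ 0 < b := by
    rw [hH.mem_runs]
    refine ⟨fun h => by have := h.1; simp only at this; omega, fun h => ?_⟩
    obtain ⟨l1, l2, l3, l4⟩ := hr
    exact ⟨by simp only; omega, by simp only; omega, by simp only; omega, l3,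
      by simp only [add_sub_cancel_right]; omega, by simp only; omega⟩
  have mem_merged : (s₀, t₀) ∈ runs N H' := by
    rw [hH'.mem_runs]
    obtain ⟨l1, l2, l3, l4⟩ := hl
    obtain ⟨r1, r2, r3, r4⟩ := hr
    simp only [IsRun]
    rw [hne s₀ (by omega), hne t₀ (by omega), hne (s₀ - 1) (by omega), hne (t₀ + 1) (by omega)]
    refine ⟨by omega, by omega, by omega, fun u hu1 hu2 => ?_, by omega, by omega⟩
    rcases lt_trichotomy u p with h | rfl | h
    · rw [hne u h.ne]; have := l3 u hu1 (by omega); omega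
    · omega
    · rw [hne u h.ne']; have := r3 u (by omega) hu2; omega
  have not_mem_left : (s₀, p - 1) ∉ runs N H' := by
    rw [hH'.mem_runs]
    rintro ⟨-, -, -, -, -, h⟩
    simp only [sub_add_cancel] at h
    rw [hne s₀ (by omega), hl.2.1] at h
    omega
  have not_mem_right : (p + 1, t₀) ∉ runs N H' := by
    rw [hH'.mem_runs]
    rintro ⟨-, -, -, -, h, -⟩
    simp only [add_sub_cancel_right] at h
    rw [hne (p + 1) (by omega)] at h
    omega
  have not_mem_merged : (s₀, t₀) ∉ runs N H := by
    rw [hH.mem_runs]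
    rintro ⟨-, -, -, h, -, -⟩
    have := h p (by simp only; omega) (by simp only; omega)
    rw [hl.2.1] at this
    omega
  have hset : (runs N H').erase (s₀, t₀) = ((runs N H).erase (s₀, p - 1)).erase (p + 1, t₀) := by
    ext ⟨s, t⟩
    simp only [Finset.mem_erase, ne_eq, Prod.mk.injEq]
    constructor
    · rintro ⟨h1, h2⟩
      refine ⟨?_, ?_, hH.mem_runs.2 (isRun_of_isRun_valleyFlip hp hv hp' hne hl hr
        (hH'.mem_runs.1 h2) h1)⟩
      · rintro ⟨rfl, rfl⟩; exact not_mem_right h2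
      · rintro ⟨rfl, rfl⟩; exact not_mem_left h2
    · rintro ⟨h1, h2, h3⟩
      refine ⟨?_, hH'.mem_runs.2 (isRun_valleyFlip_of_isRun hp hv hp' hne hl hr
        (hH.mem_runs.1 h3) h2 h1)⟩
      rintro ⟨rfl, rfl⟩; exact not_mem_merged h3
  have erase_sum : ∀ (S : Finset (ℤ × ℤ)) (x : ℤ × ℤ) (m : ℤ), (x.2 - x.1) / 2 = m →
      (x ∈ S ↔ 0 < m) → ∑ st ∈ S, dyckWeight α ((st.2 - st.1) / 2) =
        ∑ st ∈ S.erase x, dyckWeight α ((st.2 - st.1) / 2) + dyckWeight α m := by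
    rintro S x m rfl hx
    by_cases h : x ∈ S
    · rw [Finset.sum_erase_add _ _ h]
    · rw [Finset.erase_eq_of_notMem h]
      have : dyckWeight α ((x.2 - x.1) / 2) = 0 := if_pos (by rw [hx] at h; omega)
      rw [this, add_zero]
  have e1 := erase_sum (runs N H') (s₀, t₀) (a + b + 1) (by simp only; omega)
    (iff_of_true mem_merged (by omega))
  have e2 := erase_sum (runs N H) (s₀, p - 1) a (by simp only; omega) mem_left
  have e3 := erase_sum ((runs N H).erase (s₀, p - 1)) (p + 1, t₀) b (by simp only; omega) (by
    rw [Finset.mem_erase, mem_right, and_iff_right]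
    simp only [ne_eq, Prod.mk.injEq]
    omega)
  simp only [posVariant]
  rw [e1, e2, e3, hset]
  ring

theorem rightHalf_congr {H H' : ℤ → ℤ} {p : ℤ} (h : ∀ t, p < t → H' t = H t) :
    rightHalf H' p = rightHalf H p := by
  simp only [rightHalf, rightExtent]
  congr 5
  funext m
  rw [h _ (by omega), h _ (by omega)]

theorem leftHalf_congr {N : ℤ} {H H' : ℤ → ℤ} {p : ℤ} (h : ∀ t, t < p → H' t = H t) :
    leftHalf N H' p = leftHalf N H p :=
  rightHalf_congr fun t ht => h _ (by omega)

theorem posVariant_peakFlip (α : ℝ) {N : ℤ} {H : ℤ → ℤ} (hH : IsPath N H) {p : ℤ}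
    (h0 : 0 < p) (hN : p < N) (hp : H (p - 1) = H (p + 1)) (hv : H p = H (p + 1) + 1)
    (hk : 0 ≤ H (p + 1)) :
    posVariant α N (flipPath H p) - posVariant α N H =
      -(dyckWeight α (leftHalf N H p + rightHalf H p + 1) - dyckWeight α (leftHalf N H p)
        - dyckWeight α (rightHalf H p)) := by
  have hne : ∀ t, t ≠ p → flipPath H p t = H t := fun t ht => flipPath_of_ne H ht
  have h1 := hne (p - 1) (by omega)
  have h2 := hne (p + 1) (by omega)
  have h := posVariant_valleyFlip α (hH.flipPath h0 hN) h0 hN (by omega)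
    (by rw [flipPath_self]; omega) (by omega)
  rw [flipPath_flipPath, rightHalf_congr (H := H) fun t ht => hne t ht.ne',
    leftHalf_congr (H := H) fun t ht => hne t ht.ne] at h
  linarith

theorem isRun_flipPath_of_neg {H : ℤ → ℤ} {p s t : ℤ}
    (hp : H (p - 1) = H (p + 1)) (hk : H (p + 1) < 0) (h : IsRun H s t) :
    IsRun (flipPath H p) s t := by
  obtain ⟨r1, r2, r3, r4, r5, r6⟩ := h
  have hin : ∀ u, s ≤ u → u ≤ t → u ≠ p := by
    rintro u h1 h2 rfl
    rcases lt_or_ge u t with h | h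
    · have := r4 (u + 1) (by omega) (by omega); omega
    · have := r4 (u - 1) (by omega) (by omega); omega
  have hne : ∀ u, s ≤ u → u ≤ t → flipPath H p u = H u := fun u h1 h2 =>
    flipPath_of_ne H (hin u h1 h2)
  have hs1 : s - 1 ≠ p := by rintro rfl; rw [sub_add_cancel] at hk; omega
  have ht1 : t + 1 ≠ p := by rintro rfl; rw [add_sub_cancel_right] at hp; omega
  rw [IsRun, hne s le_rfl r1.le, hne t r1.le le_rfl, flipPath_of_ne _ hs1, flipPath_of_ne _ ht1]
  exact ⟨r1, r2, r3, fun u h1 h2 => by rw [hne u h1 h2]; exact r4 u h1 h2, r5, r6⟩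

theorem posVariant_flipPath_of_neg (α : ℝ) {N : ℤ} {H : ℤ → ℤ} (hH : IsPath N H) {p : ℤ}
    (h0 : 0 < p) (hN : p < N) (hp : H (p - 1) = H (p + 1)) (hk : H (p + 1) < 0) :
    posVariant α N (flipPath H p) = posVariant α N H := by
  have hH' := hH.flipPath h0 hN
  have h1 := flipPath_of_ne H (show p - 1 ≠ p by omega)
  have h2 := flipPath_of_ne H (show p + 1 ≠ p by omega)
  have : runs N (flipPath H p) = runs N H := by
    ext st
    rw [hH.mem_runs, hH'.mem_runs]
    refine ⟨fun h => ?_, isRun_flipPath_of_neg hp hk⟩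
    have := isRun_flipPath_of_neg (p := p) (by omega) (by omega) h
    rwa [flipPath_flipPath] at this
  simp only [posVariant, this]

/-- The inner positions of the path at which a flip does not increase the number of mismatches. -/
noncomputable def allowedSites (N : ℤ) (H : ℤ → ℤ) : Finset ℤ :=
  (Finset.Ioo 0 N).filter fun p => H (p - 1) = H (p + 1) ∧
    ((2 ≤ p ∧ H (p - 2) ≠ H p) ∨ (p + 2 ≤ N ∧ H (p + 2) ≠ H p))

/-- The allowed flip sites based at a nonnegative height. -/
noncomputable def posSites (N : ℤ) (H : ℤ → ℤ) : Finset ℤ :=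
  (allowedSites N H).filter fun p => 0 ≤ H (p + 1)

theorem mem_posSites {N : ℤ} {H : ℤ → ℤ} {p : ℤ} : p ∈ posSites N H ↔
    (0 < p ∧ p < N) ∧ H (p - 1) = H (p + 1) ∧ 0 ≤ H (p + 1) ∧
      ((2 ≤ p ∧ H (p - 2) ≠ H p) ∨ (p + 2 ≤ N ∧ H (p + 2) ≠ H p)) := by
  simp only [posSites, allowedSites, Finset.mem_filter, Finset.mem_Ioo]
  tauto

theorem mem_posSites_reverse {N : ℤ} {H : ℤ → ℤ} {p : ℤ} :
    N - p ∈ posSites N (reversePath N H) ↔ p ∈ posSites N H := by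
  simp only [mem_posSites, reversePath]
  rw [show N - (N - p - 1) = p + 1 by ring, show N - (N - p + 1) = p - 1 by ring,
    show N - (N - p - 2) = p + 2 by ring, show N - (N - p + 2) = p - 2 by ring,
    show N - (N - p) = p by ring]
  grind

/-- A flip of the valley `p` that extends an excursion to the left. -/
def IsLeftExtension (H : ℤ → ℤ) (p : ℤ) : Prop :=
  H p = H (p + 1) - 1 ∧ H (p - 2) = H p ∧ H (p + 2) ≠ H p

/-- A flip of the peak `p` that shortens an excursion from the left. -/
def IsLeftReduction (H : ℤ → ℤ) (p : ℤ) : Prop :=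
  H p = H (p + 1) + 1 ∧ 2 ≤ p ∧ H (p - 2) ≠ H p

/-- The part of the variation at the site `p` that is charged to its left side. -/
noncomputable def leftCharge (α : ℝ) (n : ℕ) (H : ℤ → ℤ) (p : ℤ) : ℝ :=
  (if IsLeftExtension H p then
    dyckWeight α (rightHalf H p + 1) - dyckWeight α (rightHalf H p) + drift α n else 0) -
  if IsLeftReduction H p then sideLoss α (rightHalf H p) - drift α n else 0

theorem IsPath.rightHalf_pos {N : ℤ} {H : ℤ → ℤ} (hH : IsPath N H) {p : ℤ}
    (hp : 0 ≤ H (p + 1)) (h : H (p + 1) < H (p + 2)) : 0 < rightHalf H p := by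
  obtain ⟨-, -, -, h4⟩ := hH.isRightEnd_rightHalf hp
  have := rightHalf_nonneg H p
  by_contra hb
  rw [show p + 1 + 2 * rightHalf H p + 1 = p + 2 by omega] at h4
  omega

theorem IsPath.rightHalf_eq_zero {N : ℤ} {H : ℤ → ℤ} (hH : IsPath N H) {p : ℤ}
    (hp : 0 ≤ H (p + 1)) (h : H (p + 2) < H (p + 1)) : rightHalf H p = 0 := by
  obtain ⟨-, -, h3, -⟩ := hH.isRightEnd_rightHalf hp
  have := rightHalf_nonneg H p
  by_contra hb
  have := h3 (p + 2) (by omega) (by omega)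
  omega

theorem IsPath.leftHalf_pos {N : ℤ} {H : ℤ → ℤ} (hH : IsPath N H) {p : ℤ}
    (hp : 0 ≤ H (p - 1)) (h : H (p - 1) < H (p - 2)) : 0 < leftHalf N H p := by
  refine hH.reverse.rightHalf_pos ?_ ?_ <;>
  simpa only [reversePath, show N - (N - p + 1) = p - 1 by ring,
    show N - (N - p + 2) = p - 2 by ring]

theorem IsPath.leftHalf_eq_zero {N : ℤ} {H : ℤ → ℤ} (hH : IsPath N H) {p : ℤ}
    (hp : 0 ≤ H (p - 1)) (h : H (p - 2) < H (p - 1)) : leftHalf N H p = 0 := by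
  refine hH.reverse.rightHalf_eq_zero ?_ ?_ <;>
  simpa only [reversePath, show N - (N - p + 1) = p - 1 by ring,
    show N - (N - p + 2) = p - 2 by ring]

theorem leftCharge_eq (α : ℝ) (n : ℕ) (H : ℤ → ℤ) (p : ℤ) : leftCharge α n H p =
    (if H p = H (p + 1) - 1 ∧ H (p - 2) = H p ∧ H (p + 2) ≠ H p then
      dyckWeight α (rightHalf H p + 1) - dyckWeight α (rightHalf H p) + drift α n else 0) -
    if H p = H (p + 1) + 1 ∧ 2 ≤ p ∧ H (p - 2) ≠ H p then
      sideLoss α (rightHalf H p) - drift α n else 0 := by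
  unfold leftCharge
  congr 1 <;> exact if_congr Iff.rfl rfl rfl

theorem leftCharge_reverse (α : ℝ) (n : ℕ) {N : ℤ} {H : ℤ → ℤ} {p : ℤ}
    (hp : H (p - 1) = H (p + 1)) : leftCharge α n (reversePath N H) (N - p) =
    (if H p = H (p + 1) - 1 ∧ H (p + 2) = H p ∧ H (p - 2) ≠ H p then
      dyckWeight α (leftHalf N H p + 1) - dyckWeight α (leftHalf N H p) + drift α n else 0) -
    if H p = H (p + 1) + 1 ∧ p + 2 ≤ N ∧ H (p + 2) ≠ H p then
      sideLoss α (leftHalf N H p) - drift α n else 0 := by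
  simp only [leftCharge_eq, leftHalf]
  simp only [reversePath, show N - (N - p + 1) = p - 1 by ring,
    show N - (N - p - 2) = p + 2 by ring, show N - (N - p + 2) = p - 2 by ring,
    show N - (N - p) = p by ring, hp]
  have : 2 ≤ N - p ↔ p + 2 ≤ N := by omega
  simp only [this]

theorem variation_le_charges {α : ℝ} (hα : α ∈ Set.Ioo (0 : ℝ) 1) {n : ℕ} (hn : 2 ≤ n)
    {N : ℤ} {H : ℤ → ℤ} (hH : IsPath N H) {p : ℤ} (hp : p ∈ posSites N H) :
    posVariant α N (flipPath H p) - posVariant α N H + drift α n ≤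
      leftCharge α n H p + leftCharge α n (reversePath N H) (N - p) := by
  obtain ⟨⟨h0, hN⟩, he, hk, hal⟩ := mem_posSites.1 hp
  rw [leftCharge_eq, leftCharge_reverse α n he]
  have hk' : 0 ≤ H (p - 1) := by omega
  have hc := drift_nonneg hα n
  have step1 := hH.step (p - 2)
  have step2 := hH.step (p + 1)
  have step3 := hH.step p
  rw [show p - 2 + 1 = p - 1 by ring] at step1
  rw [show p + 1 + 1 = p + 2 by ring] at step2
  have hb := rightHalf_nonneg H p
  have ha := leftHalf_nonneg N H p
  rcases step3 with hpk | hpk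
  · rw [posVariant_valleyFlip α hH h0 hN he (by omega) hk]
    rcases lt_or_ge (H (p - 2)) (H (p - 1)) with hl | hl
    · have a0 := hH.leftHalf_eq_zero hk' hl
      rw [if_pos (by omega), if_neg (by omega), if_neg (by omega), if_neg (by omega), a0,
        dyckWeight_zero, zero_add]
      linarith
    · have a1 := hH.leftHalf_pos hk' (by omega)
      rcases lt_or_ge (H (p + 2)) (H (p + 1)) with hr | hr
      · have b0 := hH.rightHalf_eq_zero hk hr
        rw [if_neg (by omega), if_neg (by omega), if_pos (by omega), if_neg (by omega), b0,
          dyckWeight_zero, add_zero]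
        linarith
      · have b1 := hH.rightHalf_pos hk (by omega)
        rw [if_neg (by omega), if_neg (by omega), if_neg (by omega), if_neg (by omega)]
        have := merge_add_drift_nonpos hα hn a1 b1
        linarith
  · rw [posVariant_peakFlip α hH h0 hN he (by omega) hk]
    have h2α : 0 < (2 : ℝ) ^ α := by positivity
    by_cases hl : 2 ≤ p ∧ H (p - 2) ≠ H p
    · have a0 := hH.leftHalf_eq_zero hk' (by omega)
      rw [if_neg (by omega), if_pos (by omega), if_neg (by omega), a0, zero_add, dyckWeight_zero]
      split_ifs with hr
      · have b0 := hH.rightHalf_eq_zero hk (by omega)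
        rw [b0, zero_add, dyckWeight_zero, dyckWeight_one, sideLoss, if_pos le_rfl]
        linarith
      · rw [sideLoss]
        split_ifs with hb0
        · rw [show rightHalf H p = 0 by omega, zero_add, dyckWeight_zero, dyckWeight_one]
          linarith
        · linarith
    · have hr : p + 2 ≤ N ∧ H (p + 2) ≠ H p := hal.resolve_left hl
      have b0 := hH.rightHalf_eq_zero hk (by omega)
      rw [if_neg (by omega), if_neg (by omega), if_neg (by omega), if_pos (by omega), b0, add_zero,
        dyckWeight_zero, sideLoss]
      split_ifs with ha0
      · rw [show leftHalf N H p = 0 by omega, zero_add, dyckWeight_zero, dyckWeight_one]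
        linarith
      · linarith

/-- The top of the ascent that starts at the left extension `p`. -/
theorem exists_ascent_top {N : ℤ} {H : ℤ → ℤ} (hH : IsPath N H) {p : ℤ}
    (hk : 0 ≤ H (p + 1)) (he : IsLeftExtension H p) :
    ∃ q, p + 2 ≤ q ∧ (∀ u, p ≤ u → u < q → H (u + 1) = H u + 1) ∧ H (q + 1) = H q - 1 := by
  obtain ⟨h1, h2, h3⟩ := he
  have step2 := hH.step (p + 1)
  rw [show p + 1 + 1 = p + 2 by ring] at step2
  have hex : ∃ m : ℕ, H (p + m + 1) < H (p + m) := by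
    have hb := hH.bounds_of_nonneg hk
    refine ⟨(N - p).toNat, ?_⟩
    rw [hH.right _ (by omega), hH.right _ (by omega)]
    omega
  classical
  have hspec := Nat.find_spec hex
  have hmin : ∀ m : ℕ, m < Nat.find hex → ¬ H (p + m + 1) < H (p + m) := fun m => Nat.find_min hex
  set m := Nat.find hex
  have m0 : m ≠ 0 := by
    intro h
    rw [h] at hspec
    simp only [Nat.cast_zero, add_zero] at hspec
    omega
  have m1 : m ≠ 1 := by
    intro h
    rw [h] at hspec
    simp only [Nat.cast_one] at hspec
    rw [show p + 1 + 1 = p + 2 by ring] at hspec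
    omega
  refine ⟨p + m, by omega, fun u hu1 hu2 => ?_, ?_⟩
  · have := hmin (u - p).toNat (by omega)
    rw [show p + ((u - p).toNat : ℤ) = u by omega] at this
    have := hH.step u
    omega
  · have := hH.step (p + m)
    omega

theorem ascent_height {H : ℤ → ℤ} {p q : ℤ} (h : ∀ u, p ≤ u → u < q → H (u + 1) = H u + 1)
    (m : ℕ) (hm : p + m ≤ q) : H (p + m) = H p + m := by
  induction m with
  | zero => simp
  | succ m ih =>
    have h1 := ih (by push_cast at hm; omega)
    have h2 := h (p + m) (by omega) (by push_cast at hm; omega)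
    push_cast
    rw [← add_assoc]
    omega

/-- The variation caused by a left extension is compensated at the top of its ascent. -/
theorem exists_compensating_reduction {N : ℤ} {H : ℤ → ℤ} (hH : IsPath N H) {p : ℤ}
    (hp : p ∈ posSites N H) (he : IsLeftExtension H p) :
    ∃ q ∈ posSites N H, IsLeftReduction H q ∧ p + 2 ≤ q ∧
      (∀ u, p ≤ u → u < q → H (u + 1) = H u + 1) ∧ rightHalf H q < rightHalf H p := by
  obtain ⟨⟨h0, hN⟩, hpe, hk, hal⟩ := mem_posSites.1 hp
  obtain ⟨q, hq, hasc, hdesc⟩ := exists_ascent_top hH hk he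
  have a1 := hasc (q - 1) (by omega) (by omega)
  have a2 := hasc (q - 2) (by omega) (by omega)
  have hgt := ascent_height hasc (q - 1 - p).toNat (by omega)
  rw [show p + ((q - 1 - p).toNat : ℤ) = q - 1 by omega] at hgt
  rw [show q - 1 + 1 = q by ring] at a1
  rw [show q - 2 + 1 = q - 1 by ring] at a2
  have h1 := he.1
  have hqN : q < N := by
    by_contra h
    have := hH.right q (by omega)
    omega
  refine ⟨q, mem_posSites.2 ⟨⟨by omega, hqN⟩, by omega, by omega, Or.inl ⟨by omega, by omega⟩⟩,
    ⟨by omega, by omega, by omega⟩, hq, hasc, ?_⟩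
  obtain ⟨b1, b2, b3, b4⟩ := hH.isRightEnd_rightHalf (p := q) (by omega)
  obtain ⟨c1, c2, c3, c4⟩ := hH.isRightEnd_rightHalf (p := p) (by omega)
  by_contra hcon
  set e := p + 1 + 2 * rightHalf H p
  rcases le_or_gt (q + 1) (e + 1) with h | h
  · have := b3 (e + 1) h (by omega)
    omega
  · have := ascent_height hasc (e + 1 - p).toNat (by omega)
    rw [show p + ((e + 1 - p).toNat : ℤ) = e + 1 by omega] at this
    omega

theorem sum_leftCharge_nonpos {α : ℝ} (hα : α ∈ Set.Ioo (0 : ℝ) 1) {n : ℕ} (hn : 2 ≤ n)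
    {H : ℤ → ℤ} (hH : IsPath (2 * n) H) : ∑ p ∈ posSites (2 * n) H, leftCharge α n H p ≤ 0 := by
  simp only [leftCharge]
  rw [Finset.sum_sub_distrib, ← Finset.sum_filter, ← Finset.sum_filter, sub_nonpos]
  have hhalf : ∀ p ∈ posSites (2 * n) H, rightHalf H p + 1 ≤ n := by
    intro p hp
    obtain ⟨⟨h0, hN⟩, -, hk, -⟩ := mem_posSites.1 hp
    obtain ⟨-, c2, -, -⟩ := hH.isRightEnd_rightHalf hk
    have := hH.bounds_of_nonneg (t := p + 1 + 2 * rightHalf H p) (by omega)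
    omega
  choose! τ hmem hred hle hasc hlt using
    fun p (h : p ∈ posSites (2 * n) H ∧ IsLeftExtension H p) =>
      exists_compensating_reduction hH h.1 h.2
  have hinj : Set.InjOn τ ((posSites (2 * n) H).filter (IsLeftExtension H)) := by
    have aux : ∀ p₁ p₂, p₁ ∈ posSites (2 * n) H ∧ IsLeftExtension H p₁ →
        p₂ ∈ posSites (2 * n) H ∧ IsLeftExtension H p₂ → τ p₁ = τ p₂ → p₂ ≤ p₁ := by
      intro p₁ p₂ h₁ h₂ heq
      by_contra hlt
      have := hasc p₁ h₁ (p₂ - 1) (by omega) (by have := hle p₂ h₂; omega)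
      rw [sub_add_cancel] at this
      have e := (mem_posSites.1 h₂.1).2.1
      have := h₂.2.1
      omega
    intro p₁ h₁ p₂ h₂ heq
    have h₁ := Finset.mem_filter.1 h₁
    have h₂ := Finset.mem_filter.1 h₂
    exact le_antisymm (aux _ _ h₂ h₁ heq.symm) (aux _ _ h₁ h₂ heq)
  calc _ ≤ ∑ p ∈ (posSites (2 * n) H).filter (IsLeftExtension H),
        (sideLoss α (rightHalf H (τ p)) - drift α n) := by
        refine Finset.sum_le_sum fun p hp => ?_
        have hp := Finset.mem_filter.1 hp
        exact extension_add_drift_le hα hn (rightHalf_nonneg _ _) (hlt p hp) (hhalf p hp.1)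
    _ = ∑ q ∈ ((posSites (2 * n) H).filter (IsLeftExtension H)).image τ,
        (sideLoss α (rightHalf H q) - drift α n) := by rw [Finset.sum_image hinj]
    _ ≤ _ := by
        refine Finset.sum_le_sum_of_subset_of_nonneg ?_ fun q hq _ => ?_
        · intro q hq
          obtain ⟨p, hp, rfl⟩ := Finset.mem_image.1 hq
          have hp := Finset.mem_filter.1 hp
          exact Finset.mem_filter.2 ⟨hmem p hp, hred p hp⟩
        · exact sub_nonneg.2 (drift_le_sideLoss hα hn (hhalf q (Finset.mem_filter.1 hq).1))

/-- The total variation of the contribution of the positive Dyck factors over the allowed flips. -/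
theorem sum_posVariant_variation_le {α : ℝ} (hα : α ∈ Set.Ioo (0 : ℝ) 1) {n : ℕ} (hn : 2 ≤ n)
    {H : ℤ → ℤ} (hH : IsPath (2 * n) H) :
    ∑ p ∈ allowedSites (2 * n) H, (posVariant α (2 * n) (flipPath H p) - posVariant α (2 * n) H)
      ≤ -(drift α n * (posSites (2 * n) H).card) := by
  have hpos : ∑ p ∈ posSites (2 * n) H,
      (posVariant α (2 * n) (flipPath H p) - posVariant α (2 * n) H + drift α n) ≤ 0 := by
    calc _ ≤ ∑ p ∈ posSites (2 * n) H,
          (leftCharge α n H p + leftCharge α n (reversePath (2 * n) H) (2 * n - p)) :=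
          Finset.sum_le_sum fun p hp => variation_le_charges hα hn hH hp
      _ = ∑ p ∈ posSites (2 * n) H, leftCharge α n H p +
          ∑ p ∈ posSites (2 * n) (reversePath (2 * n) H),
            leftCharge α n (reversePath (2 * n) H) p := by
          rw [Finset.sum_add_distrib]
          congr 1
          refine Finset.sum_nbij' (fun p => 2 * n - p) (fun p => 2 * n - p)
            (fun p hp => mem_posSites_reverse.2 hp) (fun p hp => ?_) (fun p _ => by ring)
            (fun p _ => by ring) (fun p _ => rfl)
          rw [← mem_posSites_reverse, sub_sub_cancel]
          exact hp
      _ ≤ 0 := add_nonpos (sum_leftCharge_nonpos hα hn hH) (sum_leftCharge_nonpos hα hn hH.reverse)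
  rw [Finset.sum_add_distrib, Finset.sum_const, nsmul_eq_mul] at hpos
  have hsub : ∑ p ∈ posSites (2 * n) H,
      (posVariant α (2 * n) (flipPath H p) - posVariant α (2 * n) H) =
      ∑ p ∈ allowedSites (2 * n) H,
        (posVariant α (2 * n) (flipPath H p) - posVariant α (2 * n) H) := by
    refine Finset.sum_subset (Finset.filter_subset _ _) fun p hp hnp => ?_
    have hk : H (p + 1) < 0 := by
      by_contra h
      exact hnp (Finset.mem_filter.2 ⟨hp, by omega⟩)
    simp only [allowedSites, Finset.mem_filter, Finset.mem_Ioo] at hp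
    rw [posVariant_flipPath_of_neg α hH hp.1.1 hp.1.2 hp.2.1 hk, sub_self]
  linarith

theorem count_map_not (w : Word) (b : Bool) : (w.map not).count b = w.count !b := by
  induction w with
  | nil => rfl
  | cons x w ih => cases x <;> cases b <;> simp_all

theorem height_map_not (w : Word) (s : ℕ) : height (w.map not) s = -height w s := by
  simp [height, ← List.map_take, count_map_not]

theorem height_zero (w : Word) : height w 0 = 0 := by simp [height]

theorem height_cons_succ (x : Bool) (w : Word) (j : ℕ) :
    height (x :: w) (j + 1) = (if x then 1 else -1) + height w j := by
  cases x <;> simp [height] <;> ring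

theorem height_append_of_le (u v : Word) {j : ℕ} (h : j ≤ u.length) :
    height (u ++ v) j = height u j := by
  simp [height, List.take_append_of_le_length h]

theorem height_append_add (u v : Word) (j : ℕ) :
    height (u ++ v) (u.length + j) = height u u.length + height v j := by
  simp [height, List.take_length_add_append]
  ring

theorem height_succ (w : Word) {i : ℕ} (hi : i < w.length) :
    height w (i + 1) = height w i + if w.getD i true then 1 else -1 := by
  induction w generalizing i with
  | nil => simp at hi
  | cons x w ih =>
    cases i with
    | zero => simp [height_cons_succ, height_zero]
    | succ i =>
      rw [height_cons_succ, height_cons_succ, ih (by simpa using hi)]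
      simp [add_assoc]

theorem height_succ_or (w : Word) {i : ℕ} (hi : i < w.length) :
    height w (i + 1) = height w i + 1 ∨ height w (i + 1) = height w i - 1 := by
  rw [height_succ w hi]
  split_ifs <;> omega

theorem IsConfig.height_length {n : ℕ} {w : Word} (hw : IsConfig n w) : height w (2 * n) = 0 := by
  have := List.count_true_add_count_false w
  rw [height, ← hw.1, List.take_length]
  have h1 := hw.1
  have h2 := hw.2
  omega

theorem IsConfig.map_not {n : ℕ} {w : Word} (hw : IsConfig n w) : IsConfig n (w.map not) := by
  have := List.count_true_add_count_false w
  have h1 := hw.1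
  have h2 := hw.2
  refine ⟨by simpa using hw.1, ?_⟩
  rw [count_map_not]
  simp only [Bool.not_true]
  omega

/-- The height function of `w`, extended to `ℤ` by letters `1` before the word and letters `2`
after it. -/
noncomputable def extPath (w : Word) (t : ℤ) : ℤ :=
  if t < 0 then t else if t ≤ w.length then height w t.toNat else w.length - t

theorem extPath_natCast {w : Word} {s : ℕ} (hs : s ≤ w.length) : extPath w s = height w s := by
  simp [extPath, hs]

theorem IsConfig.isPath_extPath {n : ℕ} {w : Word} (hw : IsConfig n w) :
    IsPath (2 * n) (extPath w) := by
  have hlen : (w.length : ℤ) = 2 * n := by exact_mod_cast hw.1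
  have hend : extPath w w.length = 0 := by
    rw [extPath_natCast le_rfl, hw.1, hw.height_length]
  refine ⟨by positivity, fun t => ?_, fun t ht => ?_, fun t ht => ?_⟩
  · rcases lt_or_ge t 0 with h | h
    · left
      rcases eq_or_lt_of_le (Int.add_one_le_of_lt h) with h1 | h1
      · rw [h1]; simp [extPath, height_zero]; omega
      · simp [extPath, h, h1]
    · lift t to ℕ using h
      rcases lt_or_ge t w.length with h1 | h1
      · rw [extPath_natCast h1.le, ← Nat.cast_succ, extPath_natCast h1]
        exact height_succ_or w h1
      · right
        have e1 : extPath w (t + 1) = w.length - (t + 1) := by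
          simp only [extPath]; rw [if_neg (by omega), if_neg (by omega)]
        have e2 : extPath w t = w.length - t := by
          rcases h1.eq_or_lt with h2 | h2
          · rw [← h2, hend, sub_self]
          · simp only [extPath]; rw [if_neg (by omega), if_neg (by omega)]
        omega
  · rcases ht.eq_or_lt with rfl | h
    · simp [extPath, height_zero]
    · simp [extPath, h]
  · rcases ht.eq_or_lt with h | h
    · rw [← h, ← hlen, hend, sub_self]
    · simp only [extPath]; rw [if_neg (by omega), if_neg (by omega), hlen]

theorem CanFlip.exists_eq_append {w : Word} {i : ℕ} (h : CanFlip w i) :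
    ∃ u x v, w = u ++ x :: (!x) :: v ∧ u.length = i ∧ flip w i = u ++ (!x) :: x :: v := by
  obtain ⟨h1, h2⟩ := h
  induction w generalizing i with
  | nil => simp at h1
  | cons a w ih =>
    cases i with
    | zero =>
      cases w with
      | nil => simp at h1
      | cons b w =>
        refine ⟨[], a, w, ?_, rfl, ?_⟩ <;> cases a <;> cases b <;> simp_all [flip]
    | succ i =>
      obtain ⟨u, x, v, e1, e2, e3⟩ := ih (i := i) (by simpa using h1) (by simpa using h2)
      refine ⟨a :: u, x, v, by rw [e1]; rfl, by simp [e2], ?_⟩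
      rw [List.cons_append, ← e3]
      simp [flip]

theorem IsConfig.isConfig_flip {n : ℕ} {w : Word} (hw : IsConfig n w) {i : ℕ} (h : CanFlip w i) :
    IsConfig n (flip w i) := by
  obtain ⟨u, x, v, e1, -, e3⟩ := h.exists_eq_append
  have hperm : (flip w i).Perm w := by
    rw [e3, e1]
    exact (List.Perm.swap x (!x) v).append_left u
  exact ⟨hperm.length_eq.trans hw.1, (hperm.count_eq true).trans hw.2⟩

theorem length_flip (w : Word) (i : ℕ) : (flip w i).length = w.length := by simp [flip]

theorem height_flip_of_ne {w : Word} {i t : ℕ} (h : CanFlip w i) (ht : t ≠ i + 1) :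
    height (flip w i) t = height w t := by
  obtain ⟨u, x, v, e1, rfl, e3⟩ := h.exists_eq_append
  rw [e3]
  conv_rhs => rw [e1]
  rcases le_or_gt t u.length with h1 | h1
  · rw [height_append_of_le _ _ h1, height_append_of_le _ _ h1]
  · obtain ⟨j, rfl⟩ : ∃ j, t = u.length + (j + 2) := ⟨t - u.length - 2, by omega⟩
    rw [height_append_add, height_append_add]
    simp only [height_cons_succ]
    ring

theorem height_flip_self {w : Word} {i : ℕ} (h : CanFlip w i) :
    height (flip w i) (i + 1) = height w i + height w (i + 2) - height w (i + 1) := by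
  obtain ⟨u, x, v, e1, rfl, e3⟩ := h.exists_eq_append
  rw [e3]
  conv_rhs => rw [e1]
  have := height_append_add u (x :: (!x) :: v) 0
  rw [add_zero] at this
  rw [this, height_append_add, height_append_add, height_append_add]
  simp only [height_cons_succ, height_zero]
  ring

theorem extPath_flip {w : Word} {i : ℕ} (h : CanFlip w i) :
    extPath (flip w i) = flipPath (extPath w) (i + 1) := by
  have hi := h.1
  funext t
  by_cases ht : t = i + 1
  · subst ht
    rw [flipPath_self, add_sub_cancel_right]
    have e1 : ((i : ℤ) + 1) = ((i + 1 : ℕ) : ℤ) := by push_cast; rfl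
    have e2 : ((i : ℤ) + 1 + 1) = ((i + 2 : ℕ) : ℤ) := by push_cast; ring
    rw [e2, e1, extPath_natCast (by rw [length_flip]; omega), extPath_natCast (by omega),
      extPath_natCast (by omega), extPath_natCast (by omega), height_flip_self h]
  · rw [flipPath_of_ne _ ht]
    simp only [extPath, length_flip]
    split_ifs with h1 h2
    · rfl
    · rw [height_flip_of_ne h (by omega)]
    · rfl

theorem mismatches_cons_cons (x y : Bool) (w : Word) :
    mismatches (x :: y :: w) = (if x = y then 1 else 0) + mismatches (y :: w) := by
  simp only [mismatches, List.tail_cons, List.zip_cons_cons, List.countP_cons, beq_iff_eq]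
  ring

theorem mismatches_singleton (x : Bool) : mismatches [x] = 0 := by simp [mismatches]

theorem mismatches_append_cons (u : Word) (x : Bool) (v : Word) :
    mismatches (u ++ x :: v) = mismatches (u ++ [x]) + mismatches (x :: v) := by
  induction u with
  | nil => simp [mismatches_singleton]
  | cons a u ih =>
    cases u with
    | nil => simp [mismatches_cons_cons, mismatches_singleton]
    | cons b u =>
      simp only [List.cons_append] at ih ⊢
      rw [mismatches_cons_cons, mismatches_cons_cons, ih]
      ring

theorem mismatches_append_pair (u : Word) (z x : Bool) :
    mismatches (u ++ [z, x]) = mismatches (u ++ [z]) + if z = x then 1 else 0 := by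
  rw [mismatches_append_cons, mismatches_cons_cons, mismatches_singleton, add_zero]

theorem mismatches_map_not (w : Word) : mismatches (w.map not) = mismatches w := by
  induction w with
  | nil => rfl
  | cons a w ih =>
    cases w with
    | nil => rfl
    | cons b w =>
      simp only [List.map_cons] at ih ⊢
      rw [mismatches_cons_cons, mismatches_cons_cons, ih]
      simp

/-- Exchanging two different adjacent letters does not increase the number of mismatches exactly
if at least one of them equals its other neighbour. -/
theorem mismatches_swap_le_iff (u : Word) (x : Bool) (v : Word) (h : u ≠ [] ∨ v ≠ []) :
    mismatches (u ++ (!x) :: x :: v) ≤ mismatches (u ++ x :: (!x) :: v) ↔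
      u.getLast? = some x ∨ v.head? = some !x := by
  rw [mismatches_append_cons, mismatches_append_cons u x, mismatches_cons_cons,
    mismatches_cons_cons]
  rcases List.eq_nil_or_concat u with rfl | ⟨u, z, rfl⟩ <;> rcases v with _ | ⟨y, v⟩
  · simp at h
  · rw [mismatches_cons_cons, mismatches_cons_cons]
    cases x <;> cases y <;> simp [mismatches_singleton]
  · simp only [List.concat_eq_append, List.append_assoc, List.singleton_append,
      mismatches_append_pair]
    cases x <;> cases z <;> simp [mismatches_singleton]
  · simp only [List.concat_eq_append, List.append_assoc, List.singleton_append,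
      mismatches_append_pair, mismatches_cons_cons]
    cases x <;> cases y <;> cases z <;> simp <;> omega

theorem mem_allowedFlips_iff {w : Word} (hw : 2 < w.length) {i : ℕ} : i ∈ allowedFlips w ↔
    CanFlip w i ∧ ((0 < i ∧ w.getD (i - 1) true = w.getD i true) ∨
      (i + 2 < w.length ∧ w.getD (i + 2) true = w.getD (i + 1) true)) := by
  simp only [allowedFlips, Finset.mem_filter, Finset.mem_range]
  rw [and_iff_right_of_imp fun h => by have := h.1.1; omega]
  refine and_congr_right fun h => ?_
  obtain ⟨u, x, v, e1, rfl, e3⟩ := h.exists_eq_append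
  have hne : u ≠ [] ∨ v ≠ [] := by
    by_contra hcon
    push Not at hcon
    rw [e1, hcon.1, hcon.2] at hw
    simp at hw
  rw [e3]
  conv_lhs => rw [e1]
  rw [mismatches_swap_le_iff u x v hne]
  rw [e1]
  refine or_congr ?_ ?_
  · rcases List.eq_nil_or_concat u with rfl | ⟨u, z, rfl⟩ <;> simp
  · rcases v with _ | ⟨y, v⟩ <;> simp

theorem IsConfig.mem_allowedSites_iff {n : ℕ} (hn : 2 ≤ n) {w : Word} (hw : IsConfig n w) {i : ℕ} :
    (i : ℤ) + 1 ∈ allowedSites (2 * n) (extPath w) ↔ i ∈ allowedFlips w := by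
  have hlen := hw.1
  rw [mem_allowedFlips_iff (by omega)]
  simp only [allowedSites, Finset.mem_filter, Finset.mem_Ioo, CanFlip]
  by_cases hi : i + 1 < w.length
  swap
  · exact iff_of_false (fun h => hi (by omega)) fun h => hi h.1.1
  have e0 : extPath w ((i : ℤ) + 1 - 1) = height w i := by
    rw [add_sub_cancel_right, extPath_natCast (by omega)]
  have e1 : extPath w ((i : ℤ) + 1) = height w (i + 1) := by
    rw [← Nat.cast_succ, extPath_natCast (by omega)]
  have e2 : extPath w ((i : ℤ) + 1 + 1) = height w (i + 2) := by
    rw [← extPath_natCast (by omega)]; congr 1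
  have h0 := height_succ w (i := i) (by omega)
  have h1 := height_succ w (i := i + 1) (by omega)
  rw [e0, e1, e2, ← and_assoc]
  refine and_congr (by
    rw [and_iff_right (by omega), and_iff_right hi, h1, h0]
    cases w.getD i true <;> cases w.getD (i + 1) true <;> simp <;> omega) (or_congr ?_ ?_)
  · rcases i with _ | j
    · simp
    · have e3 : extPath w (((j + 1 : ℕ) : ℤ) + 1 - 2) = height w j := by
        rw [← extPath_natCast (by omega)]; congr 1; push_cast; ring
      have h3 := height_succ w (i := j) (by omega)
      rw [e3, h0, h3, Nat.add_sub_cancel]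
      refine and_congr (by omega) ?_
      cases w.getD j true <;> cases w.getD (j + 1) true <;> simp <;> omega
  · refine and_congr_left' (by omega) |>.trans (and_congr_right fun hi2 => ?_)
    have e3 : extPath w ((i : ℤ) + 1 + 2) = height w (i + 3) := by
      rw [← extPath_natCast (by omega)]; congr 1
    have h3 := height_succ w (i := i + 2) (by omega)
    rw [e3, h3, h1]
    cases w.getD (i + 1) true <;> cases w.getD (i + 2) true <;> simp <;> omega

theorem IsConfig.allowedSites_eq_image {n : ℕ} (hn : 2 ≤ n) {w : Word} (hw : IsConfig n w) :
    allowedSites (2 * n) (extPath w) = (allowedFlips w).image fun i : ℕ => (i : ℤ) + 1 := by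
  ext p
  simp only [Finset.mem_image]
  constructor
  · intro hp
    have h0 : 0 < p := (Finset.mem_Ioo.1 (Finset.mem_filter.1 hp).1).1
    have hp' : ((p.toNat - 1 : ℕ) : ℤ) + 1 = p := by omega
    exact ⟨p.toNat - 1, (hw.mem_allowedSites_iff hn).1 (hp'.symm ▸ hp), hp'⟩
  · rintro ⟨i, hi, rfl⟩
    exact (hw.mem_allowedSites_iff hn).2 hi

theorem getD_map_not {w : Word} {i : ℕ} (hi : i < w.length) :
    (w.map not).getD i true = !w.getD i true := by
  simp [List.getD_eq_getElem?_getD, hi]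

theorem canFlip_map_not {w : Word} {i : ℕ} : CanFlip (w.map not) i ↔ CanFlip w i := by
  simp only [CanFlip, List.length_map]
  refine and_congr_right fun h => ?_
  rw [getD_map_not h, getD_map_not (by omega)]
  simp

theorem flip_map_not {w : Word} {i : ℕ} (h : CanFlip w i) :
    flip (w.map not) i = (flip w i).map not := by
  simp only [flip]
  rw [getD_map_not h.1, getD_map_not (by have := h.1; omega)]
  simp [List.map_set]

theorem allowedFlips_map_not (w : Word) : allowedFlips (w.map not) = allowedFlips w := by
  ext i
  simp only [allowedFlips, Finset.mem_filter, List.length_map, canFlip_map_not]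
  refine and_congr_right fun _ => and_congr_right fun h => ?_
  rw [flip_map_not h, mismatches_map_not, mismatches_map_not]

theorem mismatches_eq_zero {w : Word}
    (h : ∀ i, i + 1 < w.length → w.getD i true ≠ w.getD (i + 1) true) : mismatches w = 0 := by
  induction w with
  | nil => rfl
  | cons a w ih =>
    cases w with
    | nil => exact mismatches_singleton a
    | cons b w =>
      rw [mismatches_cons_cons, ih fun i hi => by simpa using h (i + 1) (by simpa using hi),
        if_neg (by simpa using h 0 (by simp))]

/-- If no flip is allowed, then a single mismatch forces all adjacent letters to be equal. -/
theorem IsConfig.allowedFlips_nonempty {n : ℕ} (hn : 2 ≤ n) {w : Word} (hw : IsConfig n w)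
    (hE : 0 < mismatches w) : (allowedFlips w).Nonempty := by
  have hlen := hw.1
  by_contra hne
  have hno : ∀ i, i ∉ allowedFlips w := fun i hi => hne ⟨i, hi⟩
  simp only [mem_allowedFlips_iff (show 2 < w.length by omega), CanFlip] at hno
  obtain ⟨j, hj, hje⟩ : ∃ j, j + 1 < w.length ∧ w.getD j true = w.getD (j + 1) true := by
    by_contra hcon
    push Not at hcon
    exact hE.ne' (mismatches_eq_zero hcon)
  have hup : ∀ k, j + k + 1 < w.length → w.getD (j + k) true = w.getD (j + k + 1) true := by
    intro k
    induction k with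
    | zero => exact fun _ => hje
    | succ k ih =>
      intro hk
      have h1 := ih (by omega)
      have h2 := hno (j + k + 1)
      by_contra hcon
      exact h2 ⟨⟨by omega, hcon⟩, Or.inl ⟨by omega, h1⟩⟩
  have hdown : ∀ k ≤ j, w.getD (j - k) true = w.getD (j - k + 1) true := by
    intro k
    induction k with
    | zero => exact fun _ => hje
    | succ k ih =>
      intro hk
      have h1 := ih (by omega)
      have h2 := hno (j - (k + 1))
      rw [show j - (k + 1) + 2 = j - k + 1 by omega, show j - (k + 1) + 1 = j - k by omega] at h2
      rw [show j - (k + 1) + 1 = j - k by omega]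
      by_contra hcon
      exact h2 ⟨⟨by omega, hcon⟩, Or.inr ⟨by omega, h1.symm⟩⟩
  have hall : ∀ i, i + 1 < w.length → w.getD i true = w.getD (i + 1) true := by
    intro i hi
    rcases le_total i j with h | h
    · have := hdown (j - i) (by omega)
      rwa [show j - (j - i) = i by omega] at this
    · have := hup (i - j) (by omega)
      rwa [show j + (i - j) = i by omega] at this
  have hconst : ∀ i, i < w.length → w.getD i true = w.getD 0 true := by
    intro i
    induction i with
    | zero => exact fun _ => rfl
    | succ i ih => exact fun hi => (hall i hi).symm.trans (ih (by omega))
  have hheight : ∀ i ≤ w.length, height w i = i * if w.getD 0 true then 1 else -1 := by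
    intro i
    induction i with
    | zero => simp [height_zero]
    | succ i ih =>
      intro hi
      rw [height_succ w hi, ih (by omega), hconst i hi]
      push_cast
      ring
  have := hheight _ le_rfl
  rw [hlen, hw.height_length] at this
  split_ifs at this <;> omega

theorem height_add (w : Word) (s i : ℕ) : height w (s + i) =
    height w s + ((factor w s i).count true - (factor w s i).count false) := by
  simp only [height, factor, List.take_add, List.count_append]
  push_cast
  ring

theorem take_factor (w : Word) (s : ℕ) {i l : ℕ} (h : i ≤ l) :
    (factor w s l).take i = factor w s i := by
  simp [factor, List.take_take, h]

theorem isPosDyckAt_iff {w : Word} {s l : ℕ} : IsPosDyckAt w s l ↔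
    0 < l ∧ s + l ≤ w.length ∧ height w (s + l) = height w s ∧
      (∀ i ≤ l, height w s ≤ height w (s + i)) ∧ 0 ≤ height w s := by
  refine and_congr_right fun _ => and_congr_right fun _ => and_congr ?_ (and_congr_left' ?_)
  · rw [height_add]; omega
  · refine forall₂_congr fun i hi => ?_
    rw [take_factor w s hi, height_add]; omega

theorem factor_map_not (w : Word) (s l : ℕ) : factor (w.map not) s l = (factor w s l).map not := by
  simp [factor, ← List.map_drop, ← List.map_take]

theorem isNegDyckAt_iff {w : Word} {s l : ℕ} :
    IsNegDyckAt w s l ↔ IsPosDyckAt (w.map not) s l := by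
  simp only [IsNegDyckAt, IsPosDyckAt, factor_map_not, ← List.map_take, count_map_not,
    height_map_not, List.length_map, Bool.not_true, Bool.not_false, Left.nonneg_neg_iff]
  exact and_congr_right fun _ => and_congr_right fun _ => and_congr_left' eq_comm

theorem map_not_map_not (w : Word) : (w.map not).map not = w := by
  simp [Function.comp_def]

theorem isDyckAt_map_not {w : Word} {s l : ℕ} : IsDyckAt (w.map not) s l ↔ IsDyckAt w s l := by
  simp only [IsDyckAt, isNegDyckAt_iff, map_not_map_not]
  exact or_comm

theorem isMaxDyckAt_map_not {w : Word} {s l : ℕ} :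
    IsMaxDyckAt (w.map not) s l ↔ IsMaxDyckAt w s l := by
  simp only [IsMaxDyckAt, isDyckAt_map_not, height_map_not, neg_inj]

theorem IsPosDyckAt.not_isNegDyckAt {w : Word} {s l s' l' : ℕ} (h : IsPosDyckAt w s l)
    (h' : IsNegDyckAt w s' l') (he : height w s' = height w s) (h1 : s' ≤ s)
    (h2 : s + l ≤ s' + l') : False := by
  rw [isPosDyckAt_iff] at h
  rw [isNegDyckAt_iff, isPosDyckAt_iff] at h'
  obtain ⟨a1, a2, a3, a4, a5⟩ := h
  obtain ⟨b1, b2, b3, b4, b5⟩ := h'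
  simp only [height_map_not] at b4
  have c1 := a4 1 a1
  have c2 := b4 (s + 1 - s') (by omega)
  rw [show s' + (s + 1 - s') = s + 1 by omega] at c2
  have := height_succ_or w (i := s) (by omega)
  omega

theorem IsRun.isMaxDyckAt {n : ℕ} {w : Word} (hw : IsConfig n w) {s l : ℕ}
    (h : IsRun (extPath w) s (s + l)) : IsMaxDyckAt w s l ∧ IsPosDyckAt w s l := by
  have hlen := hw.1
  obtain ⟨h1, h2, h3, h4, h5, h6⟩ := h
  have hb := hw.isPath_extPath.bounds_of_nonneg (t := s + l) (by omega)
  have hs : extPath w s = height w s := extPath_natCast (by omega)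
  rw [hs] at h2 h3 h4 h5 h6
  have hpos : IsPosDyckAt w s l := by
    rw [isPosDyckAt_iff]
    refine ⟨by omega, by omega, ?_, fun i hi => ?_, h2⟩
    · rw [← h3, ← Nat.cast_add, extPath_natCast (by omega)]
    · rw [← extPath_natCast (s := s + i) (by omega)]
      exact h4 _ (by omega) (by omega)
  refine ⟨⟨Or.inl hpos, fun s' l' hd he hs' hl' => ?_⟩, hpos⟩
  rcases hd with hd | hd
  swap
  · exact (hpos.not_isNegDyckAt hd he hs' hl').elim
  rw [isPosDyckAt_iff] at hd
  obtain ⟨b1, b2, b3, b4, b5⟩ := hd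
  have hge : ∀ u : ℕ, s' ≤ u → u ≤ s' + l' → height w s ≤ extPath w u := by
    intro u hu1 hu2
    have := b4 (u - s') (by omega)
    rwa [show s' + (u - s') = u by omega, ← extPath_natCast (s := u) (by omega), he] at this
  have hs2 : s' = s := by
    by_contra hne
    have := hge (s - 1) (by omega) (by omega)
    rw [Nat.cast_sub (by omega), Nat.cast_one] at this
    omega
  refine ⟨hs2, ?_⟩
  by_contra hne
  have := hge (s + l + 1) (by omega) (by omega)
  push_cast at this
  omega

theorem IsMaxDyckAt.isRun {n : ℕ} {w : Word} (hw : IsConfig n w) {s l : ℕ}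
    (h : IsMaxDyckAt w s l) (hpos : IsPosDyckAt w s l) : IsRun (extPath w) s (s + l) := by
  have hH := hw.isPath_extPath
  have hlen := hw.1
  rw [isPosDyckAt_iff] at hpos
  obtain ⟨a1, a2, a3, a4, a5⟩ := hpos
  have hs : extPath w s = height w s := extPath_natCast (by omega)
  have ht : extPath w (s + l) = height w s := by
    rw [← a3, ← Nat.cast_add, extPath_natCast (by omega)]
  have hmid : ∀ u : ℤ, s ≤ u → u ≤ s + l → height w s ≤ extPath w u := by
    intro u hu1 hu2
    lift u to ℕ using by omega
    have := a4 (u - s) (by omega)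
    rwa [show s + (u - s) = u by omega, ← extPath_natCast (w := w) (s := u) (by omega)] at this
  obtain ⟨a, ha1, ha2, ha3, ha4⟩ : ∃ a, IsLeftEnd (extPath w) s a := ⟨_, hH.isLeftEnd (by omega)⟩
  obtain ⟨b, hb1, hb2, hb3, hb4⟩ : ∃ b, IsRightEnd (extPath w) (s + l) b :=
    ⟨_, hH.isRightEnd (by omega)⟩
  rw [hs] at ha2 ha3 ha4
  rw [ht] at hb2 hb3 hb4
  have hab := hH.bounds_of_nonneg (t := a) (by omega)
  have hbb := hH.bounds_of_nonneg (t := b) (by omega)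
  lift a to ℕ using hab.1
  lift b to ℕ using hbb.1
  have hea : height w a = height w s := by rw [← ha2, extPath_natCast (by omega)]
  have hd : IsPosDyckAt w a (b - a) := by
    rw [isPosDyckAt_iff, show a + (b - a) = b by omega, hea]
    refine ⟨by omega, by omega, by rw [← hb2, extPath_natCast (by omega)], fun i hi => ?_, a5⟩
    rw [← extPath_natCast (s := a + i) (by omega)]
    rcases le_total (a + i) s with h1 | h1
    · exact ha3 _ (by omega) (by omega)
    · rcases le_total (a + i) (s + l) with h2 | h2
      · exact hmid _ (by omega) (by omega)
      · exact hb3 _ (by omega) (by omega)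
  obtain ⟨e1, e2⟩ := h.2 a (b - a) (Or.inl hd) hea (by omega) (by omega)
  obtain rfl : a = s := e1
  have e3 : (b : ℤ) = a + l := by omega
  rw [e3] at hb4
  refine ⟨by omega, by omega, by omega, fun u hu1 hu2 => ?_, by omega, by omega⟩
  rw [hs]
  exact hmid u hu1 hu2

theorem IsPosDyckAt.two_mul_count {w : Word} {s l : ℕ} (h : IsPosDyckAt w s l) :
    2 * (factor w s l).count true = l := by
  have h1 := List.count_true_add_count_false (factor w s l)
  have h2 : (factor w s l).length = l := by
    have := h.2.1
    simp only [factor, List.length_take, List.length_drop]; omega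
  have := h.2.2.1
  omega

theorem mem_DF {w : Word} {sl : ℕ × ℕ} :
    sl ∈ DF w ↔ IsMaxDyckAt w sl.1 sl.2 := by
  simp only [DF, Finset.mem_filter, Finset.mem_product, Finset.mem_range, and_iff_right_iff_imp]
  rintro ⟨h | h, -⟩
  · have := h.2.1; omega
  · have := h.2.1; omega

theorem IsConfig.sum_posDyck {n : ℕ} {w : Word} (hw : IsConfig n w) (α : ℝ) :
    ∑ sl ∈ (DF w).filter (fun sl => IsPosDyckAt w sl.1 sl.2),
      (1 + ((factor w sl.1 sl.2).count true : ℝ)) ^ α = posVariant α (2 * n) (extPath w) := by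
  have hH := hw.isPath_extPath
  refine Finset.sum_bij' (fun sl _ => ((sl.1 : ℤ), (sl.1 + sl.2 : ℤ)))
    (fun st _ => (st.1.toNat, (st.2 - st.1).toNat)) ?_ ?_ ?_ ?_ ?_
  · rintro ⟨s, l⟩ h
    rw [Finset.mem_filter, mem_DF] at h
    exact hH.mem_runs.2 (h.1.isRun hw h.2)
  · rintro ⟨s, t⟩ h
    rw [hH.mem_runs] at h
    have h0 := (hH.bounds_of_nonneg h.2.1).1
    have h1 := h.1
    simp only at h h0 h1
    rw [Finset.mem_filter, mem_DF]
    refine IsRun.isMaxDyckAt hw ?_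
    simp only
    rwa [show ((s.toNat : ℕ) : ℤ) = s by omega, show s + (((t - s).toNat : ℕ) : ℤ) = t by omega]
  · rintro ⟨s, l⟩ _
    simp
  · rintro ⟨s, t⟩ h
    rw [hH.mem_runs] at h
    have h0 := (hH.bounds_of_nonneg h.2.1).1
    have h1 := h.1
    simp only at h0 h1
    ext <;> simp <;> omega
  · rintro ⟨s, l⟩ h
    have h2 := (Finset.mem_filter.1 h).2.two_mul_count
    have h3 := (Finset.mem_filter.1 h).2.1
    simp only at h2 h3 ⊢
    rw [show (s + l - s : ℤ) / 2 = (factor w s l).count true by omega, dyckWeight,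
      if_neg (by omega), Int.cast_natCast]

theorem IsConfig.phi_eq {n : ℕ} {w : Word} (hw : IsConfig n w) (α : ℝ) : phi α w =
    posVariant α (2 * n) (extPath w) + posVariant α (2 * n) (extPath (w.map not)) := by
  rw [← hw.sum_posDyck α, ← hw.map_not.sum_posDyck α, phi,
    ← Finset.sum_filter_add_sum_filter_not _ fun sl : ℕ × ℕ => IsPosDyckAt w sl.1 sl.2]
  congr 1
  refine Finset.sum_congr ?_ ?_
  · ext sl
    simp only [Finset.mem_filter, mem_DF, isMaxDyckAt_map_not, ← isNegDyckAt_iff]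
    refine and_congr_right fun h => ⟨h.1.resolve_left, fun hn hp => ?_⟩
    exact hp.not_isNegDyckAt hn rfl le_rfl le_rfl
  · rintro sl h
    rw [Finset.mem_filter, ← isNegDyckAt_iff] at h
    rw [factor_map_not, count_map_not, Bool.not_true, h.2.2.2.1]

theorem IsConfig.sum_posVariant_flip_le {α : ℝ} (hα : α ∈ Set.Ioo (0 : ℝ) 1) {n : ℕ} (hn : 2 ≤ n)
    {w : Word} (hw : IsConfig n w) :
    ∑ i ∈ allowedFlips w, (posVariant α (2 * n) (extPath (flip w i)) -
        posVariant α (2 * n) (extPath w)) ≤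
      -(drift α n * ((allowedFlips w).filter fun i => 0 ≤ height w (i + 2)).card) := by
  have hinj : Function.Injective fun i : ℕ => (i : ℤ) + 1 := fun i j h => by simpa using h
  have key := sum_posVariant_variation_le hα hn hw.isPath_extPath
  rw [posSites, hw.allowedSites_eq_image hn, Finset.sum_image hinj.injOn, Finset.filter_image,
    Finset.card_image_of_injective _ hinj] at key
  have hcan : ∀ i ∈ allowedFlips w, CanFlip w i := fun i hi => (Finset.mem_filter.1 hi).2.1
  convert key using 1
  · exact Finset.sum_congr rfl fun i hi => by rw [extPath_flip (hcan i hi)]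
  · congr 4
    refine Finset.filter_congr fun i hi => ?_
    have := (hcan i hi).1
    rw [← extPath_natCast (by omega)]
    push_cast
    rw [add_assoc]
    rfl

/-- for a configuration with at least one mismatch, the set of allowed
flips is nonempty, and the average variation of the variant `φ_α` over the allowed
flips is at most `-(α(1-α)/2) n^{α-2}`. -/
theorem variant_expected_decrease (α : ℝ) (hα : α ∈ Set.Ioo (0 : ℝ) 1)
    (n : ℕ) (hn : 2 ≤ n) (w : Word) (hw : IsConfig n w) (hE : 0 < mismatches w) :
    (allowedFlips w).Nonempty ∧
    (1 / ((allowedFlips w).card : ℝ)) *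
        ∑ i ∈ allowedFlips w, (phi α (flip w i) - phi α w)
      ≤ -(α * (1 - α) / 2) * (n : ℝ) ^ (α - 2) := by
  have hne := hw.allowedFlips_nonempty hn hE
  refine ⟨hne, ?_⟩
  have hcan : ∀ i ∈ allowedFlips w, CanFlip w i := fun i hi => (Finset.mem_filter.1 hi).2.1
  have hcard : (0 : ℝ) < (allowedFlips w).card := by exact_mod_cast hne.card_pos
  have hsplit : ∑ i ∈ allowedFlips w, (phi α (flip w i) - phi α w) =
      ∑ i ∈ allowedFlips w, (posVariant α (2 * n) (extPath (flip w i)) -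
        posVariant α (2 * n) (extPath w)) +
      ∑ i ∈ allowedFlips (w.map not), (posVariant α (2 * n) (extPath (flip (w.map not) i)) -
        posVariant α (2 * n) (extPath (w.map not))) := by
    rw [allowedFlips_map_not, ← Finset.sum_add_distrib]
    refine Finset.sum_congr rfl fun i hi => ?_
    rw [(hw.isConfig_flip (hcan i hi)).phi_eq, hw.phi_eq, flip_map_not (hcan i hi)]
    ring
  have hcover : (allowedFlips w).card ≤
      ((allowedFlips w).filter fun i => 0 ≤ height w (i + 2)).card +
        ((allowedFlips w).filter fun i => 0 ≤ height (w.map not) (i + 2)).card := by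
    refine le_trans (Finset.card_le_card fun i hi => ?_) (Finset.card_union_le _ _)
    simp only [Finset.mem_union, Finset.mem_filter, height_map_not]
    rcases le_total 0 (height w (i + 2)) with h | h
    · exact Or.inl ⟨hi, h⟩
    · exact Or.inr ⟨hi, by omega⟩
  have hpos := hw.sum_posVariant_flip_le hα hn
  have hneg := hw.map_not.sum_posVariant_flip_le hα hn
  rw [one_div, inv_mul_le_iff₀ hcard, hsplit]
  rw [allowedFlips_map_not] at hneg ⊢
  have hcover' := mul_le_mul_of_nonneg_left (Nat.cast_le (α := ℝ).2 hcover) (drift_nonneg hα n)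
  push_cast at hcover'
  have hdrift : -(α * (1 - α) / 2) * (n : ℝ) ^ (α - 2) = -drift α n := by
    rw [drift]; ring
  rw [hdrift]
  linarith

end Cooling
end

section
/- The naturally-weighted average of the volume is asymptotically (√π/2)·n^{3/2}: letting ν be the probability distribution on W_{2n} with ν(w) proportional to F(w), one has lim_{n→∞} (Σ_{w ∈ W_{2n}} ν(w)·V(w)) / ((√π/2)·n^{3/2}) = 1, i.e., lim_{n→∞} (Σ_{w ∈ W_{2n}} F(w)·V(w)) / ((Σ_{w ∈ W_{2n}} F(w)) · (√π/2)·n^{3/2}) = 1. -/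
open scoped BigOperators ENNReal

attribute [local instance] Classical.propDecidable

namespace Cooling

/-- The step `+1` or `-1` coded by a letter. -/
def step (b : Bool) : ℤ := if b then 1 else -1

/-- The total height difference `|w|₁ - |w|₂` of a word. -/
def rise : Word → ℤ
  | [] => 0
  | b :: w => step b + rise w

/-- The sum of `|h|` over all points of the path of `w` started at height `h`. -/
noncomputable def absHeightSum : ℤ → Word → ℝ
  | h, [] => |(h : ℝ)|
  | h, b :: w => |(h : ℝ)| + absHeightSum (h + step b) w

/-- The sum of `f` over all words of length `N`. -/
noncomputable def wordSum : ℕ → (Word → ℝ) → ℝ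
  | 0, f => f []
  | N + 1, f => wordSum N (fun w => f (true :: w)) + wordSum N (fun w => f (false :: w))

theorem wordSum_congr {N : ℕ} {f g : Word → ℝ} (hfg : ∀ w, w.length = N → f w = g w) :
    wordSum N f = wordSum N g := by
  induction N generalizing f g with
  | zero => exact hfg [] rfl
  | succ N ih =>
    simp only [wordSum]
    rw [ih fun w hw => hfg (true :: w) (by simp [hw]),
      ih fun w hw => hfg (false :: w) (by simp [hw])]

theorem wordSum_mono {N : ℕ} {f g : Word → ℝ} (hfg : ∀ w, w.length = N → f w ≤ g w) :
    wordSum N f ≤ wordSum N g := by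
  induction N generalizing f g with
  | zero => exact hfg [] rfl
  | succ N ih =>
    exact add_le_add (ih fun w hw => hfg (true :: w) (by simp [hw]))
      (ih fun w hw => hfg (false :: w) (by simp [hw]))

theorem wordSum_add (N : ℕ) (f g : Word → ℝ) :
    wordSum N (fun w => f w + g w) = wordSum N f + wordSum N g := by
  induction N generalizing f g with
  | zero => rfl
  | succ N ih => simp only [wordSum, ih]; ring

theorem wordSum_const_mul (N : ℕ) (c : ℝ) (f : Word → ℝ) :
    wordSum N (fun w => c * f w) = c * wordSum N f := by
  induction N generalizing f with
  | zero => rfl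
  | succ N ih => simp only [wordSum, ih]; ring

theorem sum_ofFn_eq_wordSum (N : ℕ) (f : Word → ℝ) :
    ∑ v : Fin N → Bool, f (List.ofFn v) = wordSum N f := by
  induction N generalizing f with
  | zero => simp [wordSum]
  | succ N ih =>
    rw [← (Fin.consEquiv fun _ : Fin (N + 1) => Bool).sum_comp, Fintype.sum_prod_type]
    simp [Fin.consEquiv, List.ofFn_succ, wordSum, ← ih]

theorem rise_add_length (w : Word) : rise w + w.length = 2 * w.count true := by
  induction w with
  | nil => simp [rise]
  | cons b w ih =>
    cases b <;> simp [rise, step] at * <;> omega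

theorem sum_configSet (n : ℕ) (f : Word → ℝ) :
    ∑ w ∈ configSet n, f w = wordSum (2 * n) (fun w => if rise w = 0 then f w else 0) := by
  rw [configSet, Finset.sum_filter, Finset.sum_image (fun _ _ _ _ h => List.ofFn_injective h)]
  refine (sum_ofFn_eq_wordSum (2 * n) fun w => if w.count true = n then f w else 0).trans
    (wordSum_congr fun w hw => ?_)
  have := rise_add_length w
  congr 1
  rw [eq_iff_iff]
  constructor <;> intro h <;> omega

theorem height_cons_succ_s8 (b : Bool) (w : Word) (k : ℕ) :
    height (b :: w) (k + 1) = step b + height w k := by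
  cases b <;> simp [height, step] <;> ring

theorem sum_abs_height (h : ℤ) (w : Word) :
    ∑ i ∈ Finset.range (w.length + 1), |((h + height w i : ℤ) : ℝ)| = absHeightSum h w := by
  induction w generalizing h with
  | nil => simp [absHeightSum, height_zero]
  | cons b w ih =>
    rw [List.length_cons, Finset.sum_range_succ', absHeightSum, ← ih, add_comm]
    simp only [height_cons_succ_s8, height_zero, add_zero, add_assoc]

theorem abs_add_add_step (h : ℤ) (b : Bool) :
    |((h + (h + step b) : ℤ) : ℝ)| = |(h : ℝ)| + |((h + step b : ℤ) : ℝ)| := by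
  have : |h + (h + step b)| = |h| + |h + step b| := by
    cases b <;> simp only [step] <;> grind
  exact_mod_cast this

theorem sum_abs_height_add_height_succ (h : ℤ) (w : Word) :
    ∑ k ∈ Finset.range w.length,
        |(((h + height w k) + (h + height w (k + 1)) : ℤ) : ℝ)| =
      2 * absHeightSum h w - |(h : ℝ)| - |((h + rise w : ℤ) : ℝ)| := by
  induction w generalizing h with
  | nil => simp [absHeightSum, rise]; ring
  | cons b w ih =>
    rw [List.length_cons, Finset.sum_range_succ']
    simp only [height_cons_succ_s8, height_zero, add_zero, ← add_assoc h (step b)]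
    rw [ih, abs_add_add_step, absHeightSum, rise, add_assoc]
    ring

theorem volume_eq_absHeightSum {w : Word} (hw : rise w = 0) : volume w = absHeightSum 0 w := by
  have := sum_abs_height_add_height_succ 0 w
  simp only [zero_add, hw] at this
  rw [volume, this]
  simp

theorem wordSum_flipCount_mul (N : ℕ) (g : Word → ℝ) :
    wordSum (N + 2) (fun w => (flipCount w : ℝ) * g w) =
      wordSum N (fun w => ∑ i ∈ Finset.range (N + 1),
        (g (w.take i ++ true :: false :: w.drop i) +
          g (w.take i ++ false :: true :: w.drop i))) := by
  induction N generalizing g with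
  | zero => simp [wordSum, flipCount]
  | succ N ih =>
    have key : ∀ b : Bool, wordSum (N + 2) (fun w => (flipCount (b :: w) : ℝ) * g (b :: w)) =
        wordSum (N + 2) (fun w => (flipCount w : ℝ) * g (b :: w)) +
          wordSum (N + 1) (fun w => g (b :: (!b) :: w)) := by
      intro b
      have hcons : ∀ (c : Bool) (w : Word), (flipCount (b :: c :: w) : ℝ) =
          flipCount (c :: w) + if b = c then 0 else 1 := by
        intro c w
        cases b <;> cases c <;> simp [flipCount]
      have hsplit : ∀ f : Word → ℝ, wordSum (N + 2) f =
          wordSum (N + 1) (fun w => f (true :: w)) + wordSum (N + 1) (fun w => f (false :: w)) :=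
        fun _ => rfl
      simp only [hsplit, hcons, add_mul, wordSum_add, wordSum_const_mul]
      cases b <;> simp <;> ring
    rw [wordSum, key, key, ih, ih, wordSum]
    simp only [Finset.sum_range_succ' _ (N + 1), wordSum_add, List.take_succ_cons,
      List.drop_succ_cons, List.cons_append, List.take_zero, List.drop_zero, List.nil_append,
      wordSum, Bool.not_true, Bool.not_false]
    ring

theorem rise_append (u v : Word) : rise (u ++ v) = rise u + rise v := by
  induction u with
  | nil => simp [rise]
  | cons b u ih => simp [rise, ih, add_assoc]

theorem rise_insert (w : Word) (i : ℕ) (b : Bool) :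
    rise (w.take i ++ b :: (!b) :: w.drop i) = rise w := by
  have h := rise_append (w.take i) (w.drop i)
  rw [List.take_append_drop] at h
  cases b <;> simp [rise_append, rise, step, h]

theorem absHeightSum_insert (h : ℤ) (w : Word) {i : ℕ} (hi : i ≤ w.length) (b : Bool) :
    absHeightSum h (w.take i ++ b :: (!b) :: w.drop i) =
      absHeightSum h w + |((h + height w i : ℤ) : ℝ)| +
        |((h + height w i + step b : ℤ) : ℝ)| := by
  induction i generalizing h w with
  | zero =>
    have : h + step b + step (!b) = h := by cases b <;> simp [step]
    simp only [List.take_zero, List.drop_zero, List.nil_append, absHeightSum, this, height_zero,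
      add_zero]
    ring
  | succ i ih =>
    cases w with
    | nil => simp at hi
    | cons c w =>
      simp only [List.take_succ_cons, List.drop_succ_cons, List.cons_append, absHeightSum,
        height_cons_succ_s8]
      rw [ih _ _ (by simpa using hi)]
      simp only [add_assoc]

/-- The number of paths of length `N` from height `h` to height `0`. -/
noncomputable def pathCount (N : ℕ) (h : ℤ) : ℝ :=
  wordSum N (fun w => if h + rise w = 0 then 1 else 0)

/-- The sum of `absHeightSum` over the paths of length `N` from height `h` to height `0`. -/
noncomputable def pathArea (N : ℕ) (h : ℤ) : ℝ :=
  wordSum N (fun w => if h + rise w = 0 then absHeightSum h w else 0)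

theorem pathCount_zero (h : ℤ) : pathCount 0 h = if h = 0 then 1 else 0 := by
  simp [pathCount, wordSum, rise]

theorem pathCount_succ (N : ℕ) (h : ℤ) :
    pathCount (N + 1) h = pathCount N (h + 1) + pathCount N (h - 1) := by
  simp [pathCount, wordSum, rise, step, add_assoc, sub_eq_add_neg]

theorem pathArea_zero (h : ℤ) : pathArea 0 h = 0 := by
  by_cases hh : h = 0 <;> simp [pathArea, wordSum, rise, absHeightSum, hh]

theorem pathArea_succ (N : ℕ) (h : ℤ) :
    pathArea (N + 1) h =
      |(h : ℝ)| * pathCount (N + 1) h + pathArea N (h + 1) + pathArea N (h - 1) := by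
  have key : ∀ b : Bool,
      wordSum N (fun w => if h + rise (b :: w) = 0 then absHeightSum h (b :: w) else 0) =
        |(h : ℝ)| * pathCount N (h + step b) + pathArea N (h + step b) := by
    intro b
    rw [pathCount, pathArea, ← wordSum_const_mul, ← wordSum_add]
    refine wordSum_congr fun w _ => ?_
    by_cases hw : h + (step b + rise w) = 0 <;> simp [rise, absHeightSum, add_assoc, hw]
  rw [pathArea, wordSum, key, key, pathCount_succ]
  simp only [step, if_true, Bool.false_eq_true, if_false, ← sub_eq_add_neg]
  ring

/-- The mean of the first step of a path of length `N + 1` from `h` to `0` is `-h / (N + 1)`. -/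
theorem pathCount_drift (N : ℕ) (h : ℤ) :
    ((N : ℝ) + 1) * (pathCount N (h + 1) - pathCount N (h - 1)) =
      -h * (pathCount N (h + 1) + pathCount N (h - 1)) := by
  induction N generalizing h with
  | zero =>
    simp only [pathCount_zero]
    by_cases h1 : h = 1
    · subst h1; norm_num
    by_cases h2 : h = -1
    · subst h2; norm_num
    rw [if_neg (by omega), if_neg (by omega)]; simp
  | succ N ih =>
    have h1 := ih (h + 1)
    have h2 := ih (h - 1)
    simp only [pathCount_succ, add_sub_cancel_right, sub_add_cancel] at *
    push_cast at *
    linear_combination h1 + h2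

/-- The conditional drift identity for the distance to the axis. -/
theorem pathCount_abs_drift (N : ℕ) (h : ℤ) :
    ((N : ℝ) + 1) * (|((h + 1 : ℤ) : ℝ)| * pathCount N (h + 1) +
        |((h - 1 : ℤ) : ℝ)| * pathCount N (h - 1)) =
      N * |(h : ℝ)| * pathCount (N + 1) h +
        (if h = 0 then 1 else 0) * (N + 1) * pathCount (N + 1) 0 := by
  have hd := pathCount_drift N h
  rcases lt_trichotomy h 0 with hh | rfl | hh
  · have e0 : (h : ℝ) < 0 := by exact_mod_cast hh
    have e1 : ((h + 1 : ℤ) : ℝ) ≤ 0 := by exact_mod_cast (by omega : h + 1 ≤ 0)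
    have e2 : ((h - 1 : ℤ) : ℝ) ≤ 0 := by exact_mod_cast (by omega : h - 1 ≤ 0)
    rw [abs_of_neg e0, abs_of_nonpos e1, abs_of_nonpos e2, if_neg hh.ne, pathCount_succ]
    push_cast
    linear_combination -hd
  · simp [pathCount_succ]
  · have e0 : (0 : ℝ) < h := by exact_mod_cast hh
    have e1 : (0 : ℝ) ≤ ((h + 1 : ℤ) : ℝ) := by exact_mod_cast (by omega : 0 ≤ h + 1)
    have e2 : (0 : ℝ) ≤ ((h - 1 : ℤ) : ℝ) := by exact_mod_cast (by omega : 0 ≤ h - 1)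
    rw [abs_of_pos e0, abs_of_nonneg e1, abs_of_nonneg e2, if_neg hh.ne', pathCount_succ]
    push_cast
    linear_combination hd

/-- The area expressed through the visits of the path to the axis, each weighted by the
remaining time. -/
theorem two_mul_pathArea (N : ℕ) (h : ℤ) :
    2 * pathArea N h = ((N : ℝ) + 1) * |(h : ℝ)| * pathCount N h +
      ∑ i ∈ Finset.range (N + 1),
        pathCount i h * pathCount (N - i) 0 * ((N - i : ℕ) : ℝ) := by
  induction N generalizing h with
  | zero => by_cases hh : h = 0 <;> simp [pathArea_zero, pathCount_zero, hh]
  | succ N ih =>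
    have hd := pathCount_abs_drift N h
    have h1 := ih (h + 1)
    have h2 := ih (h - 1)
    rw [Finset.sum_range_succ']
    simp only [Nat.add_sub_add_right, pathCount_succ _ h, add_mul, Finset.sum_add_distrib,
      Nat.sub_zero, pathArea_succ, pathCount_zero h] at *
    push_cast at *
    linear_combination h1 + h2 + hd

theorem pathCount_add_two_zero (N : ℕ) :
    ((N : ℝ) + 2) * pathCount (N + 2) 0 = (4 * N + 4) * pathCount N 0 := by
  have h1 := pathCount_drift N 1
  have h2 := pathCount_drift N (-1)
  norm_num at h1 h2
  simp only [pathCount_succ]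
  norm_num
  linear_combination h1 - h2

theorem pathCount_one_zero : pathCount 1 0 = 0 := by
  simp [pathCount_succ, pathCount_zero]

theorem sum_pathCount_mul_reflect (N : ℕ) :
    2 * ∑ i ∈ Finset.range (N + 1), (i : ℝ) * (pathCount i 0 * pathCount (N - i) 0) =
      N * ∑ i ∈ Finset.range (N + 1), pathCount i 0 * pathCount (N - i) 0 := by
  have h := Finset.sum_range_reflect
    (fun i => (i : ℝ) * (pathCount i 0 * pathCount (N - i) 0)) (N + 1)
  rw [two_mul]
  nth_rewrite 1 [← h]
  rw [← Finset.sum_add_distrib, Finset.mul_sum]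
  refine Finset.sum_congr rfl fun i hi => ?_
  have hi : i ≤ N := by simpa [Nat.lt_succ_iff] using hi
  rw [show N + 1 - 1 - i = N - i by omega, Nat.sub_sub_self hi, Nat.cast_sub hi]
  ring

theorem sum_pathCount_convolution (m : ℕ) :
    ∑ i ∈ Finset.range (2 * m + 1), pathCount i 0 * pathCount (2 * m - i) 0 = 4 ^ m := by
  induction m with
  | zero => simp [pathCount_zero]
  | succ m ih =>
    have h1 := sum_pathCount_mul_reflect (2 * m + 2)
    have h2 := sum_pathCount_mul_reflect (2 * m)
    rw [ih] at h2
    rw [show 2 * (m + 1) = 2 * m + 2 by ring]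
    have h3 : ∑ i ∈ Finset.range (2 * m + 2 + 1),
        (i : ℝ) * (pathCount i 0 * pathCount (2 * m + 2 - i) 0) =
        4 * ∑ i ∈ Finset.range (2 * m + 1),
          (i : ℝ) * (pathCount i 0 * pathCount (2 * m - i) 0) + 4 * 4 ^ m := by
      rw [Finset.sum_range_succ', Finset.sum_range_succ', ← ih, Finset.mul_sum, Finset.mul_sum,
        ← Finset.sum_add_distrib]
      simp only [zero_add, pathCount_one_zero, zero_mul, mul_zero, add_zero, Nat.cast_zero]
      refine Finset.sum_congr rfl fun i _ => ?_
      have := pathCount_add_two_zero i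
      rw [show 2 * m + 2 - (i + 1 + 1) = 2 * m - i by omega]
      push_cast
      linear_combination pathCount (2 * m - i) 0 * this
    rw [h3] at h1
    push_cast at h1 h2
    have hm : (2 * (m : ℝ) + 2) ≠ 0 := by positivity
    apply mul_left_cancel₀ hm
    rw [pow_succ]
    linear_combination -h1 + 4 * h2

/-- The total area of all balanced paths of length `2m`. -/
theorem pathArea_two_mul_zero (m : ℕ) : 2 * pathArea (2 * m) 0 = m * 4 ^ m := by
  have h1 := sum_pathCount_mul_reflect (2 * m)
  have h2 := sum_pathCount_convolution m
  have h3 : ∑ i ∈ Finset.range (2 * m + 1),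
        pathCount i 0 * pathCount (2 * m - i) 0 * ((2 * m - i : ℕ) : ℝ) =
      2 * m * 4 ^ m - ∑ i ∈ Finset.range (2 * m + 1),
        (i : ℝ) * (pathCount i 0 * pathCount (2 * m - i) 0) := by
    rw [← h2, Finset.mul_sum, ← Finset.sum_sub_distrib]
    refine Finset.sum_congr rfl fun i hi => ?_
    rw [Nat.cast_sub (by simpa [Nat.lt_succ_iff] using hi)]
    push_cast
    ring
  rw [two_mul_pathArea, h3]
  rw [h2] at h1
  push_cast at h1 ⊢
  simp
  linear_combination -h1 / 2

theorem wallis_mul_pathCount_sq (m : ℕ) :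
    Real.Wallis.W m * (2 * m + 1) * pathCount (2 * m) 0 ^ 2 = (4 ^ m) ^ 2 := by
  induction m with
  | zero => simp [Real.Wallis.W, pathCount_zero]
  | succ m ih =>
    have h := pathCount_add_two_zero (2 * m)
    push_cast at h
    have hc : pathCount (2 * (m + 1)) 0 =
        (4 * (2 * m) + 4) * pathCount (2 * m) 0 / (2 * m + 2) := by
      rw [eq_div_iff (by positivity), ← h]
      ring_nf
    rw [hc, Real.Wallis.W_succ, pow_succ (4 : ℝ) m, mul_pow ((4 : ℝ) ^ m), ← ih]
    push_cast
    field_simp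
    ring

theorem pathCount_two_mul_zero_pos (m : ℕ) : 0 < pathCount (2 * m) 0 := by
  induction m with
  | zero => simp [pathCount_zero]
  | succ m ih =>
    have h := pathCount_add_two_zero (2 * m)
    have : 0 < ((2 * m : ℕ) + 2 : ℝ) * pathCount (2 * m + 2) 0 := by rw [h]; positivity
    exact pos_of_mul_pos_right this (by positivity)

theorem four_pow_div_pathCount (m : ℕ) :
    4 ^ m / pathCount (2 * m) 0 = √(Real.Wallis.W m * (2 * m + 1)) := by
  have hp := pathCount_two_mul_zero_pos m
  symm
  rw [Real.sqrt_eq_iff_mul_self_eq (by have := Real.Wallis.W_pos m; positivity) (by positivity)]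
  have := wallis_mul_pathCount_sq m
  field_simp
  linarith

theorem sum_flipCount (m : ℕ) :
    ∑ w ∈ configSet (m + 1), (flipCount w : ℝ) =
      2 * (2 * m + 1) * pathCount (2 * m) 0 := by
  have := wordSum_flipCount_mul (2 * m) (fun w => if rise w = 0 then 1 else 0)
  have ht := fun w i => rise_insert w i true
  have hf := fun w i => rise_insert w i false
  simp only [Bool.not_true, Bool.not_false] at ht hf
  simp only [ht, hf, mul_ite, mul_one, mul_zero] at this
  rw [sum_configSet, show 2 * (m + 1) = 2 * m + 2 by ring, this, pathCount,
    ← wordSum_const_mul]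
  refine wordSum_congr fun w _ => ?_
  simp
  split_ifs <;> norm_num
  ring

theorem abs_add_one_add_abs_sub_one_bounds (x : ℝ) :
    2 * |x| ≤ |x + 1| + |x - 1| ∧ |x + 1| + |x - 1| ≤ 2 * |x| + 2 := by
  constructor
  · have := abs_add_le (x + 1) (x - 1)
    rw [show x + 1 + (x - 1) = 2 * x by ring, abs_mul, abs_two] at this
    exact this
  · have h1 := abs_add_le x 1
    have h2 := abs_sub x 1
    rw [abs_one] at h1 h2
    linarith

theorem sum_absHeightSum_insert (w : Word) :
    ((2 * w.length + 6 : ℝ) * absHeightSum 0 w ≤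
      ∑ i ∈ Finset.range (w.length + 1),
        (absHeightSum 0 (w.take i ++ true :: false :: w.drop i) +
          absHeightSum 0 (w.take i ++ false :: true :: w.drop i))) ∧
    ∑ i ∈ Finset.range (w.length + 1),
        (absHeightSum 0 (w.take i ++ true :: false :: w.drop i) +
          absHeightSum 0 (w.take i ++ false :: true :: w.drop i)) ≤
      (2 * w.length + 6 : ℝ) * absHeightSum 0 w + 2 * (w.length + 1) := by
  have hs : ∀ c : ℝ, ∑ i ∈ Finset.range (w.length + 1),
      (2 * absHeightSum 0 w + 4 * |((0 + height w i : ℤ) : ℝ)| + c) =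
        (2 * w.length + 6 : ℝ) * absHeightSum 0 w + c * (w.length + 1) := by
    intro c
    rw [Finset.sum_add_distrib, Finset.sum_add_distrib, Finset.sum_const, Finset.sum_const,
      ← Finset.mul_sum, sum_abs_height]
    simp
    ring
  have hi : ∀ i ∈ Finset.range (w.length + 1),
      absHeightSum 0 (w.take i ++ true :: false :: w.drop i) +
          absHeightSum 0 (w.take i ++ false :: true :: w.drop i) =
        2 * absHeightSum 0 w + 2 * |((0 + height w i : ℤ) : ℝ)| +
          (|((0 + height w i : ℤ) : ℝ) + 1| + |((0 + height w i : ℤ) : ℝ) - 1|) := by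
    intro i hi
    have hi : i ≤ w.length := by simpa [Nat.lt_succ_iff] using hi
    have ht := absHeightSum_insert 0 w hi true
    have hf := absHeightSum_insert 0 w hi false
    simp only [Bool.not_true, Bool.not_false, step, if_true, Bool.false_eq_true, if_false] at ht hf
    rw [ht, hf, Int.cast_add _ 1, Int.cast_add _ (-1)]
    push_cast
    ring_nf
  rw [Finset.sum_congr rfl hi]
  constructor
  · have h0 := hs 0
    rw [zero_mul, add_zero] at h0
    rw [← h0]
    refine Finset.sum_le_sum fun i _ => ?_
    linarith [(abs_add_one_add_abs_sub_one_bounds ((0 + height w i : ℤ) : ℝ)).1]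
  · rw [← hs 2]
    refine Finset.sum_le_sum fun i _ => ?_
    linarith [(abs_add_one_add_abs_sub_one_bounds ((0 + height w i : ℤ) : ℝ)).2]

theorem sum_flipCount_mul_volume_eq (m : ℕ) :
    ∑ w ∈ configSet (m + 1), (flipCount w : ℝ) * volume w =
      wordSum (2 * m) (fun w => if rise w = 0 then ∑ i ∈ Finset.range (w.length + 1),
        (absHeightSum 0 (w.take i ++ true :: false :: w.drop i) +
          absHeightSum 0 (w.take i ++ false :: true :: w.drop i)) else 0) := by
  have h := wordSum_flipCount_mul (2 * m) (fun w => if rise w = 0 then absHeightSum 0 w else 0)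
  have ht := fun w i => rise_insert w i true
  have hf := fun w i => rise_insert w i false
  simp only [Bool.not_true, Bool.not_false] at ht hf
  simp only [ht, hf] at h
  rw [sum_configSet, show 2 * (m + 1) = 2 * m + 2 by ring]
  trans
  · refine wordSum_congr (g := fun w => (flipCount w : ℝ) *
      if rise w = 0 then absHeightSum 0 w else 0) fun w _ => ?_
    split_ifs with hw
    · rw [volume_eq_absHeightSum hw]
    · simp
  · rw [h]
    refine wordSum_congr fun w hw => ?_
    split_ifs <;> simp [hw]

theorem le_sum_flipCount_mul_volume (m : ℕ) :
    (2 * m + 3) * (m * 4 ^ m) ≤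
      ∑ w ∈ configSet (m + 1), (flipCount w : ℝ) * volume w := by
  rw [sum_flipCount_mul_volume_eq, ← pathArea_two_mul_zero, pathArea, ← mul_assoc,
    ← wordSum_const_mul]
  refine wordSum_mono fun w hw => ?_
  simp only [zero_add]
  split_ifs
  · refine le_trans (le_of_eq ?_) (sum_absHeightSum_insert w).1
    rw [hw]; push_cast; ring
  · simp

theorem sum_flipCount_mul_volume_le (m : ℕ) :
    ∑ w ∈ configSet (m + 1), (flipCount w : ℝ) * volume w ≤
      (2 * m + 3) * (m * 4 ^ m) + 2 * (2 * m + 1) * pathCount (2 * m) 0 := by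
  rw [sum_flipCount_mul_volume_eq, ← pathArea_two_mul_zero, pathArea, pathCount, ← mul_assoc,
    ← wordSum_const_mul, ← wordSum_const_mul, ← wordSum_add]
  refine wordSum_mono fun w hw => ?_
  simp only [zero_add]
  split_ifs
  · refine le_trans (sum_absHeightSum_insert w).2 (le_of_eq ?_)
    rw [hw]; push_cast; ring
  · simp

theorem tendsto_mul_add_div_mul_add (a b c d : ℝ) (hc : c ≠ 0) :
    Filter.Tendsto (fun m : ℕ => (a * m + b) / (c * m + d)) Filter.atTop (nhds (a / c)) := by
  have h0 : Filter.Tendsto (fun m : ℕ => (m : ℝ)⁻¹) Filter.atTop (nhds 0) :=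
    tendsto_inv_atTop_nhds_zero_nat
  have h := ((h0.const_mul b).const_add a).div ((h0.const_mul d).const_add c) (by simpa using hc)
  simp only [mul_zero, add_zero] at h
  refine h.congr' ?_
  filter_upwards [Filter.eventually_gt_atTop 0] with m hm
  have : (m : ℝ) ≠ 0 := by positivity
  simp only [Pi.div_apply]
  rw [← mul_div_mul_right _ _ this]
  congr 1 <;> field_simp

theorem rpow_three_halves {x : ℝ} (hx : 0 < x) : x ^ ((3 : ℝ) / 2) = x * √x := by
  rw [show (3 : ℝ) / 2 = 1 + 1 / 2 by norm_num, Real.rpow_add hx, Real.rpow_one,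
    ← Real.sqrt_eq_rpow]

theorem tendsto_main_term :
    Filter.Tendsto (fun m : ℕ => (2 * m + 3) * (m * 4 ^ m) /
        (2 * (2 * m + 1) * pathCount (2 * m) 0 *
          (√Real.pi / 2 * ((m + 1 : ℕ) : ℝ) ^ ((3 : ℝ) / 2))))
      Filter.atTop (nhds 1) := by
  have h1 := tendsto_mul_add_div_mul_add 2 3 2 1 two_ne_zero
  have h2 := tendsto_mul_add_div_mul_add 1 0 1 1 one_ne_zero
  have h3 := tendsto_mul_add_div_mul_add 2 1 1 1 one_ne_zero
  have h4 := (Real.Wallis.tendsto_W_nhds_pi_div_two.mul h3).sqrt.div_const (√Real.pi)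
  have h := (h1.mul h2).mul h4
  have hpi : √Real.pi ≠ 0 := by have := Real.pi_pos; positivity
  rw [show Real.pi / 2 * (2 / 1) = Real.pi by ring, div_self hpi, div_self two_ne_zero,
    div_self one_ne_zero, one_mul, one_mul] at h
  refine h.congr fun m => ?_
  have hm : (0 : ℝ) < m + 1 := by positivity
  have hp := (pathCount_two_mul_zero_pos m).ne'
  have hq := four_pow_div_pathCount m
  rw [div_eq_iff hp] at hq
  push_cast
  rw [rpow_three_halves hm, hq, one_mul, add_zero, ← mul_div_assoc (Real.Wallis.W m),
    Real.sqrt_div' _ hm.le]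
  field_simp

theorem tendsto_error_term :
    Filter.Tendsto (fun m : ℕ => (√Real.pi / 2 * ((m + 1 : ℕ) : ℝ) ^ ((3 : ℝ) / 2))⁻¹)
      Filter.atTop (nhds 0) := by
  refine Filter.Tendsto.inv_tendsto_atTop (Filter.Tendsto.const_mul_atTop ?_ ?_)
  · have := Real.pi_pos
    positivity
  · exact (tendsto_rpow_atTop (by norm_num)).comp
      (tendsto_natCast_atTop_atTop.comp (Filter.tendsto_add_atTop_nat 1))

/-- the naturally-weighted average of the volume is asymptotically
`(√π / 2) n^{3/2}`, where the natural distribution `ν` on `W_{2n}` gives each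
configuration a weight proportional to its number of performable flips. -/
theorem natural_weighted_volume_asymptotics :
    Filter.Tendsto
      (fun n : ℕ =>
        (∑ w ∈ configSet n, (flipCount w : ℝ) * volume w) /
          ((∑ w ∈ configSet n, (flipCount w : ℝ)) *
            (Real.sqrt Real.pi / 2 * (n : ℝ) ^ ((3 : ℝ) / 2))))
      Filter.atTop (nhds 1) := by
  rw [← Filter.tendsto_add_atTop_iff_nat 1]
  have hsum := tendsto_main_term.add tendsto_error_term
  rw [add_zero] at hsum
  have hpos : ∀ m : ℕ, 0 < 2 * (2 * (m : ℝ) + 1) * pathCount (2 * m) 0 := fun m => by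
    have := pathCount_two_mul_zero_pos m
    positivity
  have hscale : ∀ m : ℕ, 0 < √Real.pi / 2 * ((m + 1 : ℕ) : ℝ) ^ ((3 : ℝ) / 2) := fun m => by
    have := Real.pi_pos
    positivity
  refine tendsto_of_tendsto_of_tendsto_of_le_of_le tendsto_main_term hsum ?_ ?_
  · intro m
    have := (mul_pos (hpos m) (hscale m)).le
    simp only [sum_flipCount]
    gcongr
    exact le_sum_flipCount_mul_volume m
  · intro m
    have h := (mul_pos (hpos m) (hscale m)).le
    simp only [sum_flipCount]
    refine (div_le_div_of_nonneg_right (sum_flipCount_mul_volume_le m) h).trans (le_of_eq ?_)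
    rw [add_div, div_mul_cancel_left₀ (hpos m).ne']

end Cooling
end
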